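/- arXiv:2501.02693 — 11 statements merged into one kernel-verified Lean document; each statement's English description precedes it below -/
import Mathlib

section
/- Let Y be a σ-compact Polish space, Z a σ-compact topological space, and W an arbitrary type (regarded as a discrete space). Let g : Y × Z × W → ℝ̄ be a function such that for every w ∈ W the map (y,z) ↦ g(y,z,w) is lower semicontinuous on Y × Z. Then the function f : Y → ℝ̄ defined by f(y) = inf_{z ∈ Z} sup_{w ∈ W} g(y,z,w) is Borel measurable; moreover, for every r ∈ ℝ̄ the strict sublevel set {y ∈ Y : f(y) < r} is a countable union of closed subsets of Y. -/
open MeasureTheory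

/-!
Since `sup_w g(·, ·, w)` is lower semicontinuous on `Y × Z`, its infimum over the `z` in a compact
subset of `Z` is lower semicontinuous in `y`. Exhausting `Z` by countably many compact sets writes
`f` as a countable infimum of lower semicontinuous functions `fₙ`, so `{r ≤ f} = ⋂ₙ {r ≤ fₙ}`. Each
`{r ≤ fₙ}` is a Gδ set, being the intersection of the open sets `{a < fₙ}` over a countable cofinal
set of `a < r`.
-/

open Set

section

variable {X Z L : Type*} [TopologicalSpace X]

lemma exists_iUnion_isClosed_eq_of_isGδ_compl {s : Set X} (hs : IsGδ sᶜ) :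
    ∃ C : ℕ → Set X, (∀ n, IsClosed (C n)) ∧ s = ⋃ n, C n := by
  obtain ⟨U, hU_open, hU⟩ := isGδ_iff_eq_iInter_nat.mp hs
  refine ⟨fun n => (U n)ᶜ, fun n => (hU_open n).isClosed_compl, ?_⟩
  rw [← compl_iInter, ← hU, compl_compl]

lemma exists_countable_Iio_eq_biUnion_Iic [LinearOrder L] [TopologicalSpace L] [OrderTopology L]
    [FirstCountableTopology L] (r : L) : ∃ s : Set L, s.Countable ∧ Iio r = ⋃ a ∈ s, Iic a := by
  by_cases hmin : IsMin r
  · exact ⟨∅, countable_empty, by rw [hmin.Iio_eq, biUnion_empty]⟩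
  by_cases hlim : Order.IsSuccPrelimit r
  · obtain ⟨u, -, hu_lt, hu_tendsto, -⟩ :=
      hlim.isLUB_Iio.exists_seq_strictMono_tendsto_of_notMem self_notMem_Iio
        (not_isMin_iff.mp hmin)
    have hu_isLUB : IsLUB (range u) r := .range_of_tendsto (fun n => (hu_lt n).le) hu_tendsto
    have hr_notMem : r ∉ range u := fun ⟨n, hn⟩ => (hu_lt n).ne hn
    exact ⟨range u, countable_range u, (hu_isLUB.biUnion_Iic_eq_Iio hr_notMem).symm⟩
  · obtain ⟨a, har⟩ := Order.not_isSuccPrelimit_iff.mp hlim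
    exact ⟨{a}, countable_singleton a, by rw [biUnion_singleton, har.Iio_eq]⟩

lemma isGδ_preimage_Ici_of_lowerSemicontinuous [LinearOrder L] [TopologicalSpace L]
    [OrderTopology L] [FirstCountableTopology L] {f : X → L} (hf : LowerSemicontinuous f) (r : L) :
    IsGδ (f ⁻¹' Ici r) := by
  obtain ⟨s, hs, hr⟩ := exists_countable_Iio_eq_biUnion_Iic r
  have hIci : Ici r = ⋂ a ∈ s, Ioi a := by
    rw [← compl_Iio, hr]
    simp only [compl_iUnion, compl_Iic]
  rw [hIci, preimage_iInter₂]
  exact .biInter_of_isOpen hs fun a _ => hf.isOpen_preimage a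

lemma lt_biInf_iff_of_lowerSemicontinuousOn [CompleteLinearOrder L] {f : X → L} {K : Set X}
    (hK : IsCompact K) (hne : K.Nonempty) (hf : LowerSemicontinuousOn f K) {a : L} :
    a < ⨅ x ∈ K, f x ↔ ∀ x ∈ K, a < f x := by
  refine ⟨fun h x hx => h.trans_le (biInf_le f hx), fun h => ?_⟩
  obtain ⟨x, hx, hmin⟩ := hf.exists_isMinOn hne hK
  exact (h x hx).trans_le (le_iInf₂ hmin)

variable [TopologicalSpace Z] [CompleteLinearOrder L] {h : X × Z → L}

lemma lowerSemicontinuous_biInf_of_isCompact (hh : LowerSemicontinuous h) {K : Set Z}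
    (hK : IsCompact K) : LowerSemicontinuous fun x => ⨅ z ∈ K, h (x, z) := by
  rcases K.eq_empty_or_nonempty with rfl | hne
  · simpa only [mem_empty_iff_false, iInf_false, iInf_top] using lowerSemicontinuous_const
  have lt_iff (x : X) (a : L) : a < ⨅ z ∈ K, h (x, z) ↔ ∀ z ∈ K, a < h (x, z) :=
    lt_biInf_iff_of_lowerSemicontinuousOn hK hne
      ((hh.comp (Continuous.prodMk_right x)).lowerSemicontinuousOn K)
  intro x a hxa
  simp only [lt_iff] at hxa ⊢
  exact hK.eventually_forall_of_forall_eventually fun z hz => hh (x, z) a (hxa z hz)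

lemma isGδ_setOf_le_iInf_of_lowerSemicontinuous [SigmaCompactSpace Z] [TopologicalSpace L]
    [OrderTopology L] [FirstCountableTopology L] (hh : LowerSemicontinuous h) (r : L) :
    IsGδ {x | r ≤ ⨅ z, h (x, z)} := by
  have iInf_eq (x : X) : ⨅ z, h (x, z) = ⨅ n, ⨅ z ∈ compactCovering Z n, h (x, z) := by
    rw [← iInf_iUnion, iUnion_compactCovering, iInf_univ]
  simp only [iInf_eq, le_iInf_iff (ι := ℕ), ofPred_forall]
  exact .iInter fun n => isGδ_preimage_Ici_of_lowerSemicontinuous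
    (lowerSemicontinuous_biInf_of_isCompact hh (isCompact_compactCovering Z n)) r

end

theorem stmt0_general {Y Z W L : Type*}
    [TopologicalSpace Y] [MeasurableSpace Y] [OpensMeasurableSpace Y]
    [TopologicalSpace Z] [SigmaCompactSpace Z]
    [CompleteLinearOrder L] [TopologicalSpace L] [OrderTopology L] [SecondCountableTopology L]
    [MeasurableSpace L] [BorelSpace L]
    (g : Y × Z × W → L)
    (hg : ∀ w : W, LowerSemicontinuous fun p : Y × Z => g (p.1, p.2, w)) :
    Measurable (fun y : Y => ⨅ z : Z, ⨆ w : W, g (y, z, w)) ∧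
      ∀ r : L, ∃ C : ℕ → Set Y,
        (∀ m : ℕ, IsClosed (C m)) ∧
          {y : Y | (⨅ z : Z, ⨆ w : W, g (y, z, w)) < r} = ⋃ m : ℕ, C m := by
  have isGδ_superlevel (r : L) : IsGδ {y : Y | r ≤ ⨅ z : Z, ⨆ w : W, g (y, z, w)} :=
    isGδ_setOf_le_iInf_of_lowerSemicontinuous (lowerSemicontinuous_iSup hg) r
  refine ⟨measurable_of_Ici fun r => (isGδ_superlevel r).measurableSet, fun r => ?_⟩
  apply exists_iUnion_isClosed_eq_of_isGδ_compl
  simpa only [compl_ofPred, not_lt] using isGδ_superlevel r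

/-- For σ-compact Polish `Y`, σ-compact `Z`, arbitrary `W`, and
`g : Y × Z × W → ℝ̄` lower semicontinuous in `(y,z)` for each `w`, the function
`f y = ⨅ z, ⨆ w, g (y,z,w)` is Borel measurable and each strict sublevel set
`{y | f y < r}` is a countable union of closed sets. -/
theorem stmt0 {Y Z W : Type*}
    [TopologicalSpace Y] [PolishSpace Y] [SigmaCompactSpace Y]
    [MeasurableSpace Y] [BorelSpace Y]
    [TopologicalSpace Z] [SigmaCompactSpace Z]
    (g : Y × Z × W → EReal)
    (hg : ∀ w : W, LowerSemicontinuous fun p : Y × Z => g (p.1, p.2, w)) :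
    Measurable (fun y : Y => ⨅ z : Z, ⨆ w : W, g (y, z, w)) ∧
      ∀ r : EReal, ∃ C : ℕ → Set Y,
        (∀ m : ℕ, IsClosed (C m)) ∧
          {y : Y | (⨅ z : Z, ⨆ w : W, g (y, z, w)) < r} = ⋃ m : ℕ, C m :=
  stmt0_general g hg
end

section
/- Let X be a Polish space and f : X → ℝ̄ a function. Then f is Borel measurable if and only if for every r ∈ ℝ̄ both the set {x ∈ X : f(x) > r} and the set {x ∈ X : f(x) < r} are analytic. -/
open MeasureTheory

/-!
Analytic sets are closed under countable unions and intersections. If the preimages of a subbasis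
are analytic, so are the preimages of all open sets, and then, closed sets being `Gδ`, those of all
closed sets. The preimage of an open set and its complement are thus both analytic, and Suslin's
theorem makes that preimage Borel. Conversely, a Borel subset of a continuous image of a Polish
space is analytic, being the image of its Borel preimage in that Polish space.
-/

open Set TopologicalSpace

section AnalyticSet

variable {X : Type*} [TopologicalSpace X]

theorem analyticSet_biUnion {ι : Type*} {I : Set ι} (hI : I.Countable) {s : ι → Set X}
    (hs : ∀ i ∈ I, AnalyticSet (s i)) : AnalyticSet (⋃ i ∈ I, s i) := by
  have : Countable I := hI.to_subtype
  rw [biUnion_eq_iUnion]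
  exact AnalyticSet.iUnion fun i => hs i i.2

theorem analyticSet_biInter [T2Space X] (hX : AnalyticSet (univ : Set X)) {ι : Type*} {I : Set ι}
    (hI : I.Countable) {s : ι → Set X} (hs : ∀ i ∈ I, AnalyticSet (s i)) :
    AnalyticSet (⋂ i ∈ I, s i) := by
  obtain rfl | hne := I.eq_empty_or_nonempty
  · rwa [biInter_empty]
  · have : Countable I := hI.to_subtype
    have : Nonempty I := hne.to_subtype
    rw [biInter_eq_iInter]
    exact AnalyticSet.iInter fun i => hs i i.2

theorem analyticSet_of_measurableSet [MeasurableSpace X] [BorelSpace X]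
    (hX : AnalyticSet (univ : Set X)) {s : Set X} (hs : MeasurableSet s) : AnalyticSet s := by
  obtain ⟨Z, _, _, g, hg, hgX⟩ := analyticSet_iff_exists_polishSpace_range.1 hX
  borelize Z
  have h_preimage : AnalyticSet (g ⁻¹' s) := (hg.measurable hs).analyticSet
  rw [← image_preimage_eq s (range_eq_univ.1 hgX)]
  exact h_preimage.image_of_continuous hg

end AnalyticSet

section Preimage

variable {X Y : Type*} [TopologicalSpace X] [T2Space X] [TopologicalSpace Y] {f : X → Y}

theorem analyticSet_preimage_of_isOpen_of_generateFrom [HereditarilyLindelofSpace Y]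
    (hX : AnalyticSet (univ : Set X)) {S : Set (Set Y)} (hS : ‹TopologicalSpace Y› = generateFrom S)
    (hf : ∀ s ∈ S, AnalyticSet (f ⁻¹' s)) {u : Set Y} (hu : IsOpen u) : AnalyticSet (f ⁻¹' u) := by
  let B : Set (Set Y) := (⋂₀ ·) '' {F | F.Finite ∧ F ⊆ S}
  have hB : IsTopologicalBasis B := isTopologicalBasis_of_subbasis hS
  have h_basis : ∀ b ∈ B, AnalyticSet (f ⁻¹' b) := by
    rintro _ ⟨F, ⟨hF_fin, hFS⟩, rfl⟩
    rw [preimage_sInter]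
    exact analyticSet_biInter hX hF_fin.countable fun s hs => hf s (hFS hs)
  obtain ⟨ι, b, rfl, hb⟩ := hB.open_eq_iUnion hu
  obtain ⟨J, hJ, hJ_eq⟩ := eq_open_union_countable b fun i => hB.isOpen (hb i)
  rw [← hJ_eq, preimage_iUnion₂]
  exact analyticSet_biUnion hJ fun i _ => h_basis _ (hb i)

theorem analyticSet_preimage_of_isGδ (hf : ∀ u, IsOpen u → AnalyticSet (f ⁻¹' u)) {t : Set Y}
    (ht : IsGδ t) : AnalyticSet (f ⁻¹' t) := by
  obtain ⟨u, hu, rfl⟩ := ht.eq_iInter_nat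
  rw [preimage_iInter]
  exact AnalyticSet.iInter fun n => hf _ (hu n)

variable [MeasurableSpace X] [MeasurableSpace Y] [BorelSpace Y] [PerfectlyNormalSpace Y]

theorem measurable_of_analyticSet_preimage_of_isOpen [OpensMeasurableSpace X]
    (hf : ∀ u, IsOpen u → AnalyticSet (f ⁻¹' u)) : Measurable f := by
  refine measurable_of_isOpen fun u hu => (hf u hu).measurableSet_of_compl ?_
  rw [← preimage_compl]
  exact analyticSet_preimage_of_isGδ hf hu.isClosed_compl.isGδ

variable [BorelSpace X] [HereditarilyLindelofSpace Y]

theorem measurable_iff_analyticSet_preimage_of_generateFrom (hX : AnalyticSet (univ : Set X))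
    {S : Set (Set Y)} (hS : ‹TopologicalSpace Y› = generateFrom S) :
    Measurable f ↔ ∀ s ∈ S, AnalyticSet (f ⁻¹' s) := by
  refine ⟨fun hf s hs => ?_, fun hf => measurable_of_analyticSet_preimage_of_isOpen fun _ hu =>
    analyticSet_preimage_of_isOpen_of_generateFrom hX hS hf hu⟩
  have h_open : IsOpen s := hS ▸ isOpen_generateFrom_of_mem hs
  exact analyticSet_of_measurableSet hX (hf h_open.measurableSet)

theorem stmt2_general [Preorder Y] [OrderTopology Y] (hX : AnalyticSet (univ : Set X)) :
    Measurable f ↔ ∀ r : Y, AnalyticSet {x : X | r < f x} ∧ AnalyticSet {x : X | f x < r} := by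
  rw [measurable_iff_analyticSet_preimage_of_generateFrom hX
    OrderTopology.topology_eq_generate_intervals]
  constructor
  · exact fun h r => ⟨h (Ioi r) ⟨r, .inl rfl⟩, h (Iio r) ⟨r, .inr rfl⟩⟩
  · rintro h _ ⟨r, rfl | rfl⟩
    exacts [(h r).1, (h r).2]

end Preimage

/-- A function `f : X → ℝ̄` on a Polish space is Borel measurable
iff all its strict superlevel and strict sublevel sets are analytic. -/
theorem stmt2 {X : Type*} [TopologicalSpace X] [PolishSpace X]
    [MeasurableSpace X] [BorelSpace X] (f : X → EReal) :
    Measurable f ↔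
      ∀ r : EReal, AnalyticSet {x : X | r < f x} ∧ AnalyticSet {x : X | f x < r} :=
  stmt2_general isClosed_univ.analyticSet
end

section
/- Let X be a Polish space and f : X → ℝ̄ a semi-Σ¹₁ function (for every r ∈ ℝ̄ the set {x : f(x) > r} is analytic). Then f is universally measurable: for every σ-finite Borel measure μ on X and every r ∈ ℝ̄, the set {x ∈ X : f(x) > r} is μ-null-measurable (measurable with respect to the completion of μ). -/
/-! Let `g : ℕ^ℕ → X` be continuous with range `A`, let `μ` be a finite measure and let `c < μ A`.
Since `μ` is continuous along increasing unions of arbitrary sets, the bounds `b 0, b 1, …` can be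
chosen one at a time so that the image under `g` of each `{x | ∀ i < n, x i ≤ b i}` still has outer
measure greater than `c`. The closures of these images decrease to the image of `{x | x ≤ b}`, a
compact subset of `A`, which therefore has measure at least `c`. So `A` is, up to a null set, a
countable union of compact sets. An s-finite measure has the same null sets as a finite one. -/

open MeasureTheory

open Set

/-- The set of points of the Baire space whose first `n` coordinates are bounded by those of `b`.
As `n` grows, these sets decrease to the compact set `Set.Iic b`. -/
def initialBox (b : ℕ → ℕ) (n : ℕ) : Set (ℕ → ℕ) :=
  {x | ∀ i < n, x i ≤ b i}

theorem initialBox_zero (b : ℕ → ℕ) : initialBox b 0 = univ := by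
  simp [initialBox]

theorem initialBox_succ (b : ℕ → ℕ) (n : ℕ) :
    initialBox b (n + 1) = initialBox b n ∩ {x | x n ≤ b n} := by
  ext x
  exact Nat.forall_lt_succ_right

theorem antitone_initialBox (b : ℕ → ℕ) : Antitone (initialBox b) :=
  fun _ _ hmn _ hx i hi => hx i (hi.trans_le hmn)

section Topology

theorem isCompact_Iic {α : Type*} [Preorder α] [OrderBot α] [TopologicalSpace α]
    [CompactIccSpace α] (a : α) : IsCompact (Iic a) := by
  rw [← Icc_bot]
  exact isCompact_Icc

theorem exists_finset_forall_eq_imp_mem_of_isCompact {ι : Type*} {Y : ι → Type*}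
    [∀ i, TopologicalSpace (Y i)] {C V : Set (∀ i, Y i)} (hC : IsCompact C) (hV : IsOpen V)
    (hCV : C ⊆ V) : ∃ s : Finset ι, ∀ x ∈ C, ∀ y, (∀ i ∈ s, x i = y i) → y ∈ V := by
  classical
  refine hC.induction_on
    (p := fun C => ∃ s : Finset ι, ∀ x ∈ C, ∀ y, (∀ i ∈ s, x i = y i) → y ∈ V)
    ⟨∅, by simp⟩ ?mono ?union ?nhds
  case mono => exact fun C D hCD ⟨s, hs⟩ => ⟨s, fun x hx => hs x (hCD hx)⟩
  case union =>
    rintro C D ⟨s, hs⟩ ⟨t, ht⟩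
    refine ⟨s ∪ t, fun x hx y hxy => ?_⟩
    rw [Finset.forall_mem_union] at hxy
    exact hx.elim (hs x · y hxy.1) (ht x · y hxy.2)
  case nhds =>
    intro x hx
    obtain ⟨s, u, hu, huV⟩ := isOpen_pi_iff.1 hV x (hCV hx)
    have hs : (s : Set ι).pi u ∈ nhds x :=
      set_pi_mem_nhds s.finite_toSet fun i hi => (hu i hi).1.mem_nhds (hu i hi).2
    exact ⟨_, mem_nhdsWithin_of_mem_nhds hs, s, fun z hz y hzy =>
      huV fun i hi => hzy i hi ▸ hz i hi⟩

theorem exists_initialBox_subset {b : ℕ → ℕ} {V : Set (ℕ → ℕ)} (hV : IsOpen V)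
    (hbV : Iic b ⊆ V) : ∃ n, initialBox b n ⊆ V := by
  obtain ⟨s, hs⟩ := exists_finset_forall_eq_imp_mem_of_isCompact (isCompact_Iic b) hV hbV
  obtain ⟨n, hn⟩ := s.exists_nat_subset_range
  exact ⟨n, fun x hx => hs (x ⊓ b) (mem_Iic.2 inf_le_right) x fun i hi =>
    inf_eq_left.2 (hx i (Finset.mem_range.1 (hn hi)))⟩

theorem iInter_closure_image_initialBox_subset {X : Type*} [TopologicalSpace X] [T2Space X]
    {g : (ℕ → ℕ) → X} (hg : Continuous g) (b : ℕ → ℕ) :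
    ⋂ n, closure (g '' initialBox b n) ⊆ g '' Iic b := by
  intro y hy
  by_contra hyb
  obtain ⟨U, W, hU, hW, hbU, hyW, hUW⟩ := SeparatedNhds.of_isCompact_isCompact
    ((isCompact_Iic b).image hg) isCompact_singleton (disjoint_singleton_right.2 hyb)
  obtain ⟨n, hn⟩ := exists_initialBox_subset (hU.preimage hg) (image_subset_iff.1 hbU)
  have hyU : y ∈ closure U := closure_mono (image_subset_iff.2 hn) (mem_iInter.1 hy n)
  exact disjoint_left.1 (hUW.closure_left hW) hyU (hyW rfl)

end Topology

section Measure

variable {X : Type*} [MeasurableSpace X] {μ : Measure X}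

theorem exists_lt_measure_image_inter_le {Y : Type*} {g : Y → X} {D : Set Y} {c : ENNReal}
    (h : Y → ℕ) (hc : c < μ (g '' D)) : ∃ m, c < μ (g '' (D ∩ {y | h y ≤ m})) := by
  have hmono : Monotone fun m => g '' (D ∩ {y | h y ≤ m}) := fun _ _ hmn =>
    image_mono <| inter_subset_inter_right D fun _ hy => le_trans hy hmn
  have hunion : ⋃ m, {y | h y ≤ m} = univ := iUnion_eq_univ_iff.2 fun y => ⟨h y, le_refl (h y)⟩
  rw [← inter_univ D, ← hunion, inter_iUnion, image_iUnion, hmono.measure_iUnion] at hc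
  exact lt_iSup_iff.1 hc

theorem exists_forall_lt_measure_image_initialBox {g : (ℕ → ℕ) → X} {c : ENNReal}
    (hc : c < μ (range g)) : ∃ b, ∀ n, c < μ (g '' initialBox b n) := by
  have hstep (n : ℕ) (D : {D // c < μ (g '' D)}) : ∃ m, c < μ (g '' (D ∩ {x | x n ≤ m})) :=
    exists_lt_measure_image_inter_le (fun x => x n) D.2
  choose m hm using hstep
  let D (n : ℕ) : {D // c < μ (g '' D)} :=
    n.rec ⟨univ, by rwa [image_univ]⟩ fun n D => ⟨D ∩ {x | x n ≤ m n D}, hm n D⟩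
  let b (n : ℕ) : ℕ := m n (D n)
  have hD (n : ℕ) : (D n).1 = initialBox b n := by
    induction n with
    | zero => exact (initialBox_zero b).symm
    | succ n ih => rw [initialBox_succ, ← ih]
  exact ⟨b, fun n => hD n ▸ (D n).2⟩

theorem nullMeasurableSet_of_forall_lt_exists_measurableSet {A : Set X} (hA : μ A ≠ ⊤)
    (h : ∀ c < μ A, ∃ K ⊆ A, MeasurableSet K ∧ c < μ K) : NullMeasurableSet A μ := by
  by_cases hA₀ : μ A = 0
  · exact .of_null hA₀
  obtain ⟨c, -, hcA, hc⟩ := exists_seq_strictMono_tendsto' (pos_iff_ne_zero.2 hA₀)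
  choose K hKA hK hcK using fun n => h (c n) (hcA n).2
  have hKm : MeasurableSet (⋃ n, K n) := .iUnion hK
  have hAK : μ A ≤ μ (⋃ n, K n) :=
    le_of_tendsto' hc fun n => (hcK n).le.trans (measure_mono (subset_iUnion K n))
  exact hKm.nullMeasurableSet.congr
    (ae_eq_of_subset_of_measure_ge (iUnion_subset hKA) hAK hKm.nullMeasurableSet hA)

variable [TopologicalSpace X] [T2Space X] [OpensMeasurableSpace X]

theorem le_measure_image_Iic [IsFiniteMeasure μ] {g : (ℕ → ℕ) → X} (hg : Continuous g)
    {b : ℕ → ℕ} {c : ENNReal} (hc : ∀ n, c ≤ μ (g '' initialBox b n)) :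
    c ≤ μ (g '' Iic b) := by
  have hanti : Antitone fun n => closure (g '' initialBox b n) := fun _ _ hmn =>
    closure_mono (image_mono (antitone_initialBox b hmn))
  calc
    c ≤ ⨅ n, μ (closure (g '' initialBox b n)) :=
      le_iInf fun n => (hc n).trans (measure_mono subset_closure)
    _ = μ (⋂ n, closure (g '' initialBox b n)) :=
      (hanti.measure_iInter (fun _ => isClosed_closure.nullMeasurableSet)
        ⟨0, measure_ne_top μ _⟩).symm
    _ ≤ μ (g '' Iic b) := measure_mono (iInter_closure_image_initialBox_subset hg b)

theorem innerRegularWRT_isCompact_analyticSet (μ : Measure X) [IsFiniteMeasure μ] :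
    μ.InnerRegularWRT IsCompact AnalyticSet := by
  intro A hA c hc
  rw [AnalyticSet] at hA
  obtain rfl | ⟨g, hg, rfl⟩ := hA
  · simp at hc
  obtain ⟨d, hcd, hd⟩ := exists_between hc
  obtain ⟨b, hb⟩ := exists_forall_lt_measure_image_initialBox hd
  exact ⟨g '' Iic b, image_subset_range g _, (isCompact_Iic b).image hg,
    hcd.trans_le (le_measure_image_Iic hg fun n => (hb n).le)⟩

theorem nullMeasurableSet_of_analyticSet {A : Set X} (hA : AnalyticSet A) (μ : Measure X)
    [SFinite μ] : NullMeasurableSet A μ := by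
  have hfin : NullMeasurableSet A μ.toFinite :=
    nullMeasurableSet_of_forall_lt_exists_measurableSet (measure_ne_top _ A) fun c hc =>
      let ⟨K, hKA, hK, hcK⟩ := innerRegularWRT_isCompact_analyticSet μ.toFinite hA c hc
      ⟨K, hKA, hK.measurableSet, hcK⟩
  exact hfin.mono_ac (absolutelyContinuous_toFinite μ)

end Measure

theorem stmt3_general {X α : Type*} [TopologicalSpace X] [T2Space X] [MeasurableSpace X]
    [OpensMeasurableSpace X] [LT α] (f : X → α) (hf : ∀ r, AnalyticSet {x | r < f x})
    (μ : Measure X) [SFinite μ] (r : α) : NullMeasurableSet {x | r < f x} μ :=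
  nullMeasurableSet_of_analyticSet (hf r) μ

/-- A semi-Σ¹₁ function `f : X → ℝ̄` on a Polish space is
universally measurable: all its strict superlevel sets are null-measurable
with respect to every σ-finite Borel measure on `X`. -/
theorem stmt3 {X : Type*} [TopologicalSpace X] [PolishSpace X]
    [MeasurableSpace X] [BorelSpace X] (f : X → EReal)
    (hf : ∀ r : EReal, AnalyticSet {x : X | r < f x}) :
    ∀ (μ : Measure X), SigmaFinite μ → ∀ r : EReal,
      NullMeasurableSet {x : X | r < f x} μ := by
  intro μ _ r
  exact stmt3_general f hf μ r
end

section
/- Fix n ∈ ℕ, rationals a_i < b_i for 1 ≤ i ≤ n, a real vector (x_1,…,x_n) with a_i < x_i < b_i for each i, and s ∈ ℝ. Then there exist natural numbers k_1, …, k_{3+n} such that k_1²·k_2 − k_3·Σ_{i=1}^{n} (k_1·x_i − k_{3+i} + k_3)² > s, while for every real vector (z_1,…,z_n) that does not satisfy a_i < z_i < b_i for all i, one has k_1²·k_2 − k_3·Σ_{i=1}^{n} (k_1·z_i − k_{3+i} + k_3)² < 0. -/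
/-!
Up to the factor `k₁ ^ 2`, the polynomial is `k₂ - k₃ * ∑ i, (z i - q i) ^ 2`, where
`q i = (k i - k₃) / k₁`: it is positive exactly on an open Euclidean ball with rational centre `q`
and squared radius `k₂ / k₃`. Take `k₁ = k₂ = N` and `k₃ = N * C`. The radius `1 / √C` does not
depend on `N`, so `C` can be fixed so large that the ball of radius `2 / √C` around `x` lies in the
given neighbourhood and all `x i + C` are nonnegative. With `k i = ⌊(x i + C) * N⌋₊` the centres
converge to `x` as `N → ∞`; hence the ball on which the polynomial is positive eventually lies in
the neighbourhood, while the value at `x` grows like `N ^ 3`.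
-/

open Filter Topology

section BallPoly

variable {ι : Type*}

/-- The centre `(k i - k₃) / k₁` of the ball on which `ballPoly k₁ k₂ k₃ k` is positive. The
subtraction takes place in `ℝ`, so that the natural numbers `k₁, k₃, k i` reach every rational
point. -/
noncomputable def ballCenter (k₁ k₃ : ℕ) (k : ι → ℕ) : ι → ℝ :=
  fun i ↦ ((k i : ℝ) - k₃) / k₁

theorem tendsto_ballCenter_natFloor {x : ι → ℝ} {C : ℕ} (hC : ∀ i, 0 ≤ x i + C) :
    Tendsto (fun N : ℕ ↦ ballCenter N (N * C) fun i ↦ ⌊(x i + C) * N⌋₊) atTop (𝓝 x) := by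
  refine tendsto_pi_nhds.2 fun i ↦ ?_
  have hfloor : Tendsto (fun N : ℕ ↦ (⌊(x i + C) * N⌋₊ : ℝ) / N - C) atTop (𝓝 (x i)) := by
    simpa only [Function.comp_def, add_sub_cancel_right] using
      ((tendsto_nat_floor_mul_div_atTop (hC i)).comp tendsto_natCast_atTop_atTop).sub_const (C : ℝ)
  refine hfloor.congr' ?_
  filter_upwards [eventually_ne_atTop 0] with N hN
  simp only [ballCenter]
  push_cast
  field_simp

variable [Fintype ι]

/-- The polynomial `k₁² k₂ - k₃ ∑ᵢ (k₁ zᵢ - kᵢ + k₃)²` of the balls lemma; `k i` is the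
coefficient written `k_{3+i}` in the paper. -/
def ballPoly (k₁ k₂ k₃ : ℕ) (k : ι → ℕ) (z : ι → ℝ) : ℝ :=
  (k₁ : ℝ) ^ 2 * k₂ - k₃ * ∑ i, ((k₁ : ℝ) * z i - k i + k₃) ^ 2

theorem ballPoly_eq_sq_mul {k₁ : ℕ} (hk₁ : k₁ ≠ 0) (k₂ k₃ : ℕ) (k : ι → ℕ) (z : ι → ℝ) :
    ballPoly k₁ k₂ k₃ k z =
      (k₁ : ℝ) ^ 2 * (k₂ - k₃ * ∑ i, (z i - ballCenter k₁ k₃ k i) ^ 2) := by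
  have hterm (i : ι) : ((k₁ : ℝ) * z i - k i + k₃) ^ 2 =
      (k₁ : ℝ) ^ 2 * (z i - ballCenter k₁ k₃ k i) ^ 2 := by
    simp only [ballCenter]
    field_simp
    ring
  simp only [ballPoly, hterm, ← Finset.mul_sum]
  ring

theorem sq_dist_le_sum_sq_sub (z q : ι → ℝ) : dist z q ^ 2 ≤ ∑ i, (z i - q i) ^ 2 := by
  have hdist : dist z q ≤ √(∑ i, (z i - q i) ^ 2) :=
    (dist_pi_le_iff (Real.sqrt_nonneg _)).2 fun i ↦ Real.abs_le_sqrt <|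
      Finset.single_le_sum (f := fun i ↦ (z i - q i) ^ 2) (fun j _ ↦ sq_nonneg _)
        (Finset.mem_univ i)
  exact (Real.le_sqrt dist_nonneg (by positivity)).1 hdist

theorem ballPoly_neg_of_le_dist_ballCenter {k₁ k₂ k₃ : ℕ} {k : ι → ℕ} {z : ι → ℝ} {r : ℝ}
    (hk₁ : k₁ ≠ 0) (hr : 0 ≤ r) (hk : (k₂ : ℝ) < k₃ * r ^ 2)
    (hz : r ≤ dist z (ballCenter k₁ k₃ k)) : ballPoly k₁ k₂ k₃ k z < 0 := by
  have hsum : r ^ 2 ≤ ∑ i, (z i - ballCenter k₁ k₃ k i) ^ 2 :=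
    (pow_le_pow_left₀ hr hz 2).trans (sq_dist_le_sum_sq_sub _ _)
  have houtside : (k₂ : ℝ) < k₃ * ∑ i, (z i - ballCenter k₁ k₃ k i) ^ 2 :=
    hk.trans_le (by gcongr)
  rw [ballPoly_eq_sq_mul hk₁]
  exact mul_neg_of_pos_of_neg (by positivity) (sub_neg.2 houtside)

theorem tendsto_ballPoly_atTop {x : ι → ℝ} {C : ℕ} {k : ℕ → ι → ℕ}
    (hk : Tendsto (fun N ↦ ballCenter N (N * C) (k N)) atTop (𝓝 x)) :
    Tendsto (fun N ↦ ballPoly N N (N * C) (k N) x) atTop atTop := by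
  have hsum : Tendsto (fun N ↦ ∑ i, (x i - ballCenter N (N * C) (k N) i) ^ 2) atTop (𝓝 0) := by
    simpa using tendsto_finsetSum Finset.univ fun i _ ↦
      ((tendsto_pi_nhds.1 hk i).const_sub (x i)).pow 2
  have hfactor : Tendsto (fun N ↦ 1 - C * ∑ i, (x i - ballCenter N (N * C) (k N) i) ^ 2)
      atTop (𝓝 1) := by
    simpa using (hsum.const_mul (C : ℝ)).const_sub 1
  have hcube : Tendsto (fun N : ℕ ↦ (N : ℝ) ^ 3) atTop atTop :=
    (tendsto_pow_atTop three_ne_zero).comp tendsto_natCast_atTop_atTop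
  refine (hcube.atTop_mul_pos one_pos hfactor).congr' ?_
  filter_upwards [eventually_ne_atTop 0] with N hN
  rw [ballPoly_eq_sq_mul hN]
  push_cast
  ring

end BallPoly

theorem stmt7_general {ι : Type*} [Fintype ι] {x : ι → ℝ} {U : Set (ι → ℝ)} (hU : U ∈ 𝓝 x)
    (s : ℝ) :
    ∃ (k₁ k₂ k₃ : ℕ) (k : ι → ℕ),
      s < ballPoly k₁ k₂ k₃ k x ∧ ∀ z ∉ U, ballPoly k₁ k₂ k₃ k z < 0 := by
  obtain ⟨r, hr, hrU⟩ := Metric.mem_nhds_iff.1 hU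
  obtain ⟨C, hxC, hrC⟩ : ∃ C : ℕ, ‖x‖ ≤ C ∧ 1 < C * (r / 2) ^ 2 :=
    ((tendsto_natCast_atTop_atTop.eventually_ge_atTop _).and
      ((tendsto_natCast_atTop_atTop.atTop_mul_const (by positivity)).eventually_gt_atTop _)).exists
  have hshift (i : ι) : 0 ≤ x i + C :=
    neg_le_iff_add_nonneg.1 (neg_le_of_abs_le ((norm_le_pi_norm x i).trans hxC))
  obtain ⟨k, hk⟩ : ∃ k : ℕ → ι → ℕ, Tendsto (fun N ↦ ballCenter N (N * C) (k N)) atTop (𝓝 x) :=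
    ⟨_, tendsto_ballCenter_natFloor hshift⟩
  obtain ⟨N, hN, hs, hnear⟩ := ((eventually_gt_atTop 0).and
    (((tendsto_ballPoly_atTop hk).eventually_gt_atTop s).and
      (hk (Metric.ball_mem_nhds x (half_pos hr))))).exists
  refine ⟨N, N, N * C, k N, hs, fun z hz ↦ ?_⟩
  have hfar : r ≤ dist z x := not_lt.1 fun h ↦ hz (hrU h)
  refine ballPoly_neg_of_le_dist_ballCenter hN.ne' (half_pos hr).le ?_ ?_
  · rw [Nat.cast_mul, mul_assoc]
    exact lt_mul_of_one_lt_right (Nat.cast_pos.2 hN) hrC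
  · linarith [dist_triangle z (ballCenter N (N * C) (k N)) x, Metric.mem_ball.1 hnear]

/-- the "balls" lemma. Given rational intervals `(a i, b i)`, a point
`x` in the open box, and `s ∈ ℝ`, there are naturals `k₁, k₂, k₃` and `k_{3+i}`
(here `k i` for `i : Fin n`) making the displayed polynomial value exceed `s` at `x`
while being negative at every point outside the box. -/
theorem stmt7 (n : ℕ) (a b : Fin n → ℚ) (hab : ∀ i, a i < b i)
    (x : Fin n → ℝ) (hx : ∀ i, (a i : ℝ) < x i ∧ x i < (b i : ℝ)) (s : ℝ) :
    ∃ (k₁ k₂ k₃ : ℕ) (k : Fin n → ℕ),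
      s < (k₁ : ℝ) ^ 2 * (k₂ : ℝ) -
            (k₃ : ℝ) * ∑ i : Fin n, ((k₁ : ℝ) * x i - (k i : ℝ) + (k₃ : ℝ)) ^ 2 ∧
      ∀ z : Fin n → ℝ, ¬ (∀ i, (a i : ℝ) < z i ∧ z i < (b i : ℝ)) →
        (k₁ : ℝ) ^ 2 * (k₂ : ℝ) -
            (k₃ : ℝ) * ∑ i : Fin n, ((k₁ : ℝ) * z i - (k i : ℝ) + (k₃ : ℝ)) ^ 2 < 0 := by
  exact stmt7_general (U := {z | ∀ i, (a i : ℝ) < z i ∧ z i < b i})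
    (eventually_all.2 fun i ↦ (continuous_apply i).continuousAt (Ioo_mem_nhds (hx i).1 (hx i).2)) s
end

section
/- Let A ⊆ ℝ × ℝ be a set such that for every y ∈ [0,1] the horizontal section {x ∈ [0,1] : (x,y) ∈ A} is countable, and for every x ∈ [0,1] the complementary vertical section {y ∈ [0,1] : (x,y) ∉ A} is countable. Then A ∩ ([0,1] × [0,1]) is not Lebesgue measurable: it is not null-measurable with respect to the 2-dimensional Lebesgue measure (the volume measure) on ℝ × ℝ. -/
open MeasureTheory

/-!
If `S = A ∩ (s ×ˢ t)` were null-measurable, Tonelli's theorem would let us test whether it is null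
along either family of sections. Every horizontal section is null, so `S` is null; but every
vertical section over `s` contains almost all of `t`, so `S` is not null.
-/

section TonelliNull

variable {α β : Type*} [MeasurableSpace α] [MeasurableSpace β]
  {μ : Measure α} {ν : Measure β} [SFinite ν]

theorem ae_prod_iff_ae_ae₀ {p : α × β → Prop} (hp : NullMeasurableSet {z | p z} (μ.prod ν)) :
    (∀ᵐ z ∂μ.prod ν, p z) ↔ ∀ᵐ x ∂μ, ∀ᵐ y ∂ν, p (x, y) := by
  refine ⟨Measure.ae_ae_of_ae_prod, fun hsections => ?_⟩
  obtain ⟨T, hpT, hT, hTp⟩ := hp.exists_measurable_superset_ae_eq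
  have hT_ae : ∀ᵐ z ∂μ.prod ν, z ∈ T :=
    (Measure.ae_prod_mem_iff_ae_ae_mem hT).2 <|
      hsections.mono fun _ hx => hx.mono fun _ hy => hpT hy
  exact hTp.mem_iff.mp (hT_ae.mono fun _ hz hiff => hiff.1 hz)

theorem ae_ae_comm₀ [SFinite μ] {p : α → β → Prop}
    (hp : NullMeasurableSet {z : α × β | p z.1 z.2} (μ.prod ν)) :
    (∀ᵐ x ∂μ, ∀ᵐ y ∂ν, p x y) ↔ ∀ᵐ y ∂ν, ∀ᵐ x ∂μ, p x y := by
  have hswap : MeasurePreserving Prod.swap (ν.prod μ) (μ.prod ν) := Measure.measurePreserving_swap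
  calc
    _ ↔ ∀ᵐ z ∂μ.prod ν, p z.1 z.2 := (ae_prod_iff_ae_ae₀ hp).symm
    _ ↔ ∀ᵐ z ∂ν.prod μ, p z.2 z.1 := by
      rw [← hswap.map_eq]
      exact MeasurableEquiv.prodComm.measurableEmbedding.ae_map_iff
    _ ↔ ∀ᵐ y ∂ν, ∀ᵐ x ∂μ, p x y :=
      ae_prod_iff_ae_ae₀ (hp.preimage hswap.quasiMeasurePreserving)

end TonelliNull

theorem stmt8_general {α β : Type*} [MeasurableSpace α] [MeasurableSpace β]
    {μ : Measure α} {ν : Measure β} [SFinite μ] [SFinite ν]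
    {A : Set (α × β)} {s : Set α} {t : Set β} (hs : μ s ≠ 0) (ht : ν t ≠ 0)
    (h1 : ∀ᵐ y ∂ν, y ∈ t → μ {x ∈ s | (x, y) ∈ A} = 0)
    (h2 : ∀ᵐ x ∂μ, x ∈ s → ν {y ∈ t | (x, y) ∉ A} = 0) :
    ¬ NullMeasurableSet (A ∩ s ×ˢ t) (μ.prod ν) := by
  intro hS
  have hhorizontal : ∀ᵐ y ∂ν, ∀ᵐ x ∂μ, (x, y) ∉ A ∩ s ×ˢ t := by
    filter_upwards [h1] with y hy
    by_cases hyt : y ∈ t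
    · filter_upwards [measure_eq_zero_iff_ae_notMem.1 (hy hyt)] with x hx hxS
      exact hx ⟨hxS.2.1, hxS.1⟩
    · exact .of_forall fun x hxS => hyt hxS.2.2
  have hvertical : ∀ᵐ x ∂μ, ∀ᵐ y ∂ν, (x, y) ∉ A ∩ s ×ˢ t := (ae_ae_comm₀ hS.compl).2 hhorizontal
  refine hs (measure_eq_zero_iff_ae_notMem.2 ?_)
  filter_upwards [hvertical, h2] with x hxS hxA hxs
  refine ht (measure_eq_zero_iff_ae_notMem.2 ?_)
  filter_upwards [hxS, measure_eq_zero_iff_ae_notMem.1 (hxA hxs)] with y hyS hyA hyt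
  exact hyA ⟨hyt, fun hA => hyS ⟨hA, hxs, hyt⟩⟩

/-- If `A ⊆ ℝ × ℝ` has all horizontal sections (within `[0,1]`)
countable and all complementary vertical sections (within `[0,1]`) countable,
then `A ∩ ([0,1] × [0,1])` is not Lebesgue measurable (not null-measurable for
the 2-dimensional volume measure on `ℝ × ℝ`). -/
theorem stmt8 (A : Set (ℝ × ℝ))
    (h1 : ∀ y ∈ Set.Icc (0 : ℝ) 1,
      {x ∈ Set.Icc (0 : ℝ) 1 | (x, y) ∈ A}.Countable)
    (h2 : ∀ x ∈ Set.Icc (0 : ℝ) 1,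
      {y ∈ Set.Icc (0 : ℝ) 1 | (x, y) ∉ A}.Countable) :
    ¬ NullMeasurableSet (A ∩ (Set.Icc (0 : ℝ) 1 ×ˢ Set.Icc (0 : ℝ) 1))
        (volume : Measure (ℝ × ℝ)) :=
  stmt8_general (by simp) (by simp) (.of_forall fun y hy => (h1 y hy).measure_zero volume)
    (.of_forall fun x hx => (h2 x hx).measure_zero volume)
end

section
/- Let K be a subfield of ℝ (an intermediate field of ℝ over ℚ) with [K : ℚ] = 4. Then the three real numbers 1, 2^{1/3}, 2^{1/5} are linearly independent over K (where ℝ is regarded as a K-vector space). -/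
/-!
For a prime `p`, if `a` is not a `p`-th power in a field `F`, then `X ^ p - a` is irreducible over
`F`, so a finite extension of `F` containing a `p`-th root of `a` has degree divisible by `p`.
Hence, when `p ∤ [K : F]`, `a` is still not a `p`-th power in `K`, and a `p`-th root `α` of
`a` has degree exactly `p` over `K`. For a prime `q ≠ p` with `q ∤ [K : F]`, the degree
`[K(α) : F] = [K : F] p` is prime to `q`, so `K(α)` contains no `q`-th root `β` of an element that
is not a `q`-th power in `F`. Thus `α ∉ K` and `β ∉ K(α)`, while a nontrivial `K`-linear relation
between `1`, `α`, `β` would put `β` in `K(α)` or `α` in `K`.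
-/

open Module Polynomial
open scoped IntermediateField

section PrimeRadical

variable {F L : Type*} [Field F] [Field L] [Algebra F L] {p : ℕ} {a : F} {x : L}

lemma finrank_adjoin_of_pow_eq (hp : p.Prime) (ha : ∀ b : F, b ^ p ≠ a)
    (hx : x ^ p = algebraMap F L a) : finrank F F⟮x⟯ = p := by
  have h_monic : (X ^ p - C a).Monic := monic_X_pow_sub_C a hp.ne_zero
  have h_root : aeval x (X ^ p - C a) = 0 := by simp [hx]
  have h_minpoly : X ^ p - C a = minpoly F x :=
    minpoly.eq_of_irreducible_of_monic (X_pow_sub_C_irreducible_of_prime hp ha) h_root h_monic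
  rw [IntermediateField.adjoin.finrank ⟨_, h_monic, h_root⟩, ← h_minpoly, natDegree_X_pow_sub_C]

lemma dvd_finrank_of_pow_eq (hp : p.Prime) (ha : ∀ b : F, b ^ p ≠ a)
    (hx : x ^ p = algebraMap F L a) : p ∣ finrank F L :=
  ⟨finrank F⟮x⟯ L, by rw [← finrank_mul_finrank F F⟮x⟯ L, finrank_adjoin_of_pow_eq hp ha hx]⟩

end PrimeRadical

lemma linearIndependent_one_of_notMem_adjoin {K L : Type*} [Field K] [Field L] [Algebra K L]
    {α β : L} (hα : α ∉ (⊥ : IntermediateField K L)) (hβ : β ∉ K⟮α⟯) :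
    LinearIndependent K ![1, α, β] := by
  have h_pair : LinearIndependent K ![1, α] := by
    refine (LinearIndependent.pair_iff' one_ne_zero).2 fun k hk ↦ hα ?_
    exact IntermediateField.mem_bot.2 ⟨k, by rw [Algebra.algebraMap_eq_smul_one, hk]⟩
  have h_span : Submodule.span K (Set.range ![1, α]) ≤ K⟮α⟯.toSubalgebra.toSubmodule := by
    rw [Submodule.span_le, Matrix.range_cons_cons_empty, Set.pair_subset_iff]
    exact ⟨one_mem K⟮α⟯, IntermediateField.mem_adjoin_simple_self K α⟩
  have h_init : Fin.init ![1, α, β] = ![1, α] := by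
    ext i
    fin_cases i <;> rfl
  rw [linearIndependent_finSucc', h_init]
  exact ⟨h_pair, fun h ↦ hβ (h_span h)⟩

lemma rat_pow_ne_prime {ℓ n : ℕ} (hℓ : ℓ.Prime) (hn : n ≠ 1) (b : ℚ) : b ^ n ≠ ℓ := by
  intro h
  have : Fact ℓ.Prime := ⟨hℓ⟩
  have h_val : (n : ℤ) * padicValRat ℓ b = 1 := by
    rw [← padicValRat.pow, h, padicValRat.self hℓ.one_lt]
  exact hn (Nat.dvd_one.1 (Int.natCast_dvd_natCast.1 ⟨_, h_val.symm⟩))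

theorem stmt11_general {F K L : Type*} [Field F] [Field K] [Field L] [Algebra F K] [Algebra F L]
    [Algebra K L] [IsScalarTower F K L] {p q : ℕ} (hp : p.Prime) (hq : q.Prime) (hpq : p ≠ q)
    (hpK : ¬p ∣ finrank F K) (hqK : ¬q ∣ finrank F K) {a b : F} (ha : ∀ c : F, c ^ p ≠ a)
    (hb : ∀ c : F, c ^ q ≠ b) {α β : L} (hα : α ^ p = algebraMap F L a)
    (hβ : β ^ q = algebraMap F L b) : LinearIndependent K ![1, α, β] := by
  have haK : ∀ c : K, c ^ p ≠ algebraMap F K a := fun c hc ↦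
    hpK (dvd_finrank_of_pow_eq hp ha hc)
  rw [IsScalarTower.algebraMap_apply F K L] at hα
  have hαK : α ∉ (⊥ : IntermediateField K L) := by
    rintro ⟨c, rfl⟩
    exact haK c ((algebraMap K L).injective (by simpa using hα))
  have h_finrank : finrank F K⟮α⟯ = finrank F K * p := by
    rw [← finrank_mul_finrank F K K⟮α⟯, finrank_adjoin_of_pow_eq hp haK hα]
  have hq_finrank : ¬q ∣ finrank F K⟮α⟯ := by
    rw [h_finrank, hq.dvd_mul, Nat.prime_dvd_prime_iff_eq hq hp]
    exact not_or_intro hqK hpq.symm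
  have hβα : β ∉ K⟮α⟯ := fun h ↦
    hq_finrank (dvd_finrank_of_pow_eq (x := (⟨β, h⟩ : K⟮α⟯)) hq hb (Subtype.ext hβ))
  exact linearIndependent_one_of_notMem_adjoin hαK hβα

/-- If `K` is a subfield of `ℝ` with `[K : ℚ] = 4`, then
`1, 2^{1/3}, 2^{1/5}` are linearly independent over `K`. -/
theorem stmt11 (K : IntermediateField ℚ ℝ) (hK : Module.finrank ℚ K = 4) :
    LinearIndependent K ![(1 : ℝ), (2 : ℝ) ^ ((1 : ℝ) / 3), (2 : ℝ) ^ ((1 : ℝ) / 5)] :=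
  have two_ne_pow {n : ℕ} (hn : n ≠ 1) (c : ℚ) : c ^ n ≠ 2 := rat_pow_ne_prime Nat.prime_two hn c
  stmt11_general Nat.prime_three Nat.prime_five (by simp) (by simp [hK]) (by simp [hK])
    (two_ne_pow (by simp)) (two_ne_pow (by simp))
    (by simpa using Real.rpow_inv_natCast_pow zero_le_two Nat.prime_three.ne_zero)
    (by simpa using Real.rpow_inv_natCast_pow zero_le_two Nat.prime_five.ne_zero)
end

section
/- The real number 2·arccos(1/√(2 + 4^{1/3} + 4^{1/5})) is not a rational multiple of π: there is no rational number q such that 2·arccos(1/√(2 + 4^{1/3} + 4^{1/5})) = q·π. -/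
/-!
Call a real algebraic number totally real if all of its conjugates are real; these numbers form a
field. If `2 * arccos (1 / √s) = q * π` then `2 / s - 1 = cos (q * π)`, and such cosines are totally
real: the Chebyshev polynomial `T n` takes the value `1` at `cos (q * π)`, where `n` is twice the
denominator of `q`, and hence also at all of its conjugates, while `cos (n * θ) = 1` forces `θ` to
be real. So `s = 2 + 4 ^ (1 / 3) + 4 ^ (1 / 5)` would be totally real. But some embedding
sends `4 ^ (1 / 3)` to `4 ^ (1 / 3) * exp (2 * π * I / 3)`, whose imaginary part is larger than the
modulus `4 ^ (1 / 5)` of every conjugate of `4 ^ (1 / 5)`, so that a conjugate of `s` is not real.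
-/

open NumberField Polynomial Real

theorem im_eq_zero_of_eval_chebyshev_T_eq_one {n : ℤ} (hn : n ≠ 0) {x : ℂ}
    (hx : (Chebyshev.T ℂ n).eval x = 1) : x.im = 0 := by
  obtain ⟨θ, rfl⟩ := Complex.cos_surjective x
  rw [Chebyshev.T_complex_cos, Complex.cos_eq_one_iff] at hx
  obtain ⟨k, hk⟩ := hx
  have hθ : θ = ((k * (2 * π) / n : ℝ) : ℂ) := by
    push_cast
    rw [hk, mul_div_cancel_left₀ θ (Int.cast_ne_zero.mpr hn)]
  rw [hθ, Complex.cos_ofReal_im]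

theorem mem_maximalRealSubfield_of_eval_chebyshev_T_eq_one {K : Type*} [Field K] {n : ℤ}
    (hn : n ≠ 0) {x : K} (hx : (Chebyshev.T K n).eval x = 1) : x ∈ maximalRealSubfield K := by
  intro φ
  refine Complex.conj_eq_iff_im.mpr (im_eq_zero_of_eval_chebyshev_T_eq_one hn ?_)
  rw [← Chebyshev.map_T φ, eval_map_apply, hx, map_one]

/-- The field of totally real algebraic numbers, as a subfield of `ℝ`: the real algebraic numbers
that every embedding of the field of real algebraic numbers into `ℂ` maps to a real number. -/
noncomputable def totallyRealNumbers : Subfield ℝ :=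
  (maximalRealSubfield (algebraicClosure ℚ ℝ)).map (algebraMap (algebraicClosure ℚ ℝ) ℝ)

theorem coe_mem_totallyRealNumbers {x : algebraicClosure ℚ ℝ} :
    (x : ℝ) ∈ totallyRealNumbers ↔ x ∈ maximalRealSubfield (algebraicClosure ℚ ℝ) :=
  (algebraMap (algebraicClosure ℚ ℝ) ℝ).injective.mem_set_image

theorem cos_rat_mul_pi_mem_totallyRealNumbers (q : ℚ) : cos (q * π) ∈ totallyRealNumbers := by
  have hT : (Chebyshev.T ℝ (2 * q.den : ℤ)).eval (cos (q * π)) = 1 := by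
    rw [Chebyshev.T_real_cos, cos_eq_one_iff]
    refine ⟨q.num, ?_⟩
    have hq : (q : ℝ) * q.den = q.num := mod_cast q.mul_den_eq_num
    push_cast
    linear_combination -2 * π * hq
  have hc : IsAlgebraic ℚ (cos (q * π)) :=
    (isAlgebraic_cos_rat_mul_pi q).extendScalars (algebraMap ℤ ℚ).injective_int
  lift cos (q * π) to algebraicClosure ℚ ℝ using mem_algebraicClosure_iff.mpr hc with c
  refine coe_mem_totallyRealNumbers.mpr
    (mem_maximalRealSubfield_of_eval_chebyshev_T_eq_one (n := 2 * q.den) (by simp) ?_)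
  apply (algebraMap (algebraicClosure ℚ ℝ) ℝ).injective
  rw [map_one, Chebyshev.algebraMap_eval_T]
  exact hT

theorem cos_two_mul_arccos_one_div_sqrt {s : ℝ} (hs : 1 ≤ s) :
    cos (2 * arccos (1 / √s)) = 2 / s - 1 := by
  have h_nonneg : 0 ≤ 1 / √s := by positivity
  have h_le_one : 1 / √s ≤ 1 := div_le_one_of_le₀ (one_le_sqrt.mpr hs) (sqrt_nonneg s)
  rw [cos_two_mul, cos_arccos (by linarith) h_le_one, div_pow, sq_sqrt (by linarith)]
  ring

theorem mem_totallyRealNumbers_of_two_mul_arccos_one_div_sqrt {s : ℝ} (hs : 1 ≤ s) {q : ℚ}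
    (h : 2 * arccos (1 / √s) = q * π) : s ∈ totallyRealNumbers := by
  have hcos : cos (q * π) = 2 / s - 1 := h ▸ cos_two_mul_arccos_one_div_sqrt hs
  have hs_eq : s = 2 / (cos (q * π) + 1) := by
    rw [hcos, sub_add_cancel, div_div_cancel₀ two_ne_zero]
  rw [hs_eq]
  exact div_mem (ofNat_mem _ 2) (add_mem (cos_rat_mul_pi_mem_totallyRealNumbers q) (one_mem _))

theorem exists_algHom_apply_eq_of_pow_eq {F K Ω : Type*} [Field F] [Field K] [Field Ω]
    [Algebra F K] [Algebra.IsAlgebraic F K] [Algebra F Ω] [IsAlgClosed Ω] {p : ℕ} (hp : p.Prime)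
    {d : F} (hd : ∀ r : F, r ^ p ≠ d) {x : K} (hx : x ^ p = algebraMap F K d) {y : Ω}
    (hy : y ^ p = algebraMap F Ω d) : ∃ φ : K →ₐ[F] Ω, φ x = y := by
  have h_irr : Irreducible (X ^ p - C d) := X_pow_sub_C_irreducible_of_prime hp hd
  have h_minpoly : minpoly F x = X ^ p - C d :=
    (minpoly.eq_of_irreducible_of_monic h_irr (by simp [hx])
      (monic_X_pow_sub_C d hp.ne_zero)).symm
  have h_root : y ∈ (minpoly F x).rootSet Ω := by
    rw [h_minpoly, mem_rootSet]
    exact ⟨h_irr.ne_zero, by simp [hy]⟩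
  rwa [← Algebra.IsAlgebraic.range_eval_eq_rootSet_minpoly] at h_root

theorem add_notMem_totallyRealNumbers {p n : ℕ} (hp : p.Prime) (hn : n ≠ 0) {d e : ℚ}
    (hd : ∀ r : ℚ, r ^ p ≠ d) {a b : ℝ} (ha : a ^ p = d) (hb : b ^ n = e)
    (hba : |b| < a * sin (2 * π / p)) : a + b ∉ totallyRealNumbers := by
  intro hab
  have ha_alg : IsAlgebraic ℚ a := .of_pow hp.pos (ha ▸ isAlgebraic_algebraMap d)
  have hb_alg : IsAlgebraic ℚ b := .of_pow hn.pos (hb ▸ isAlgebraic_algebraMap e)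
  lift a to algebraicClosure ℚ ℝ using mem_algebraicClosure_iff.mpr ha_alg
  lift b to algebraicClosure ℚ ℝ using mem_algebraicClosure_iff.mpr hb_alg
  set ζ : ℂ := Complex.exp ((2 * π / p : ℝ) * Complex.I) with hζ
  have hζ_pow : ζ ^ p = 1 := by
    rw [hζ, ← (Complex.isPrimitiveRoot_exp p hp.ne_zero).pow_eq_one]
    push_cast
    ring_nf
  have : Algebra.IsAlgebraic ℚ (algebraicClosure ℚ ℝ) := algebraicClosure.isAlgebraic ℚ ℝ
  obtain ⟨φ, hφ⟩ : ∃ φ : algebraicClosure ℚ ℝ →ₐ[ℚ] ℂ, φ a = (a : ℝ) * ζ := by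
    refine exists_algHom_apply_eq_of_pow_eq hp hd (Subtype.ext ha) ?_
    rw [mul_pow, hζ_pow, mul_one, ← Complex.ofReal_pow, ha, Complex.ofReal_ratCast, eq_ratCast]
  have h_im_a : (φ a).im = a * sin (2 * π / p) := by
    rw [hφ, Complex.im_ofReal_mul, hζ, Complex.exp_ofReal_mul_I_im]
  have h_norm_b : ‖φ b‖ = |(b : ℝ)| := by
    have hφb : φ b ^ n = e := by
      rw [← map_pow, show b ^ n = e from Subtype.ext hb, map_ratCast]
    refine (pow_left_inj₀ (norm_nonneg _) (abs_nonneg _) hn).mp ?_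
    rw [← norm_pow, hφb, ← abs_pow, hb, Complex.norm_ratCast]
  have h_im_add : (φ a).im + (φ b).im = 0 := by
    rw [← Complex.add_im, ← map_add]
    exact Complex.conj_eq_iff_im.mp (coe_mem_totallyRealNumbers.mp hab φ)
  linarith [neg_abs_le (φ b).im, Complex.abs_im_le_norm (φ b)]

theorem rat_pow_ne_of_not_dvd_padicValRat {p : ℕ} [Fact p.Prime] {n : ℕ} {d : ℚ}
    (hd : ¬(n : ℤ) ∣ padicValRat p d) (r : ℚ) : r ^ n ≠ d := by
  rintro rfl
  rw [padicValRat.pow] at hd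
  exact hd (dvd_mul_right _ _)

theorem rat_pow_three_ne_four : ∀ r : ℚ, r ^ 3 ≠ 4 := by
  refine rat_pow_ne_of_not_dvd_padicValRat (p := 2) ?_
  rw [show (4 : ℚ) = (2 : ℕ) ^ 2 by norm_num, padicValRat.pow, padicValRat.self one_lt_two]
  norm_num

theorem lt_mul_sin_two_pi_div_three {a b : ℝ} (ha0 : 0 ≤ a) (ha : a ^ 3 = 4)
    (hb : b ^ 5 = 4) : b < a * sin (2 * π / 3) := by
  have h_sin : sin (2 * π / 3) = √3 / 2 := by
    rw [← sin_pi_div_three, ← sin_pi_sub]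
    ring_nf
  rw [h_sin]
  refine lt_of_pow_lt_pow_left₀ 30 (by positivity) ?_
  calc
    b ^ 30 = (b ^ 5) ^ 6 := by ring
    _ < (a ^ 3) ^ 10 * (√3 ^ 2) ^ 15 / 2 ^ 30 := by
      rw [ha, hb, sq_sqrt zero_le_three]
      norm_num
    _ = (a * (√3 / 2)) ^ 30 := by ring

/-- `2·arccos(1/√(2 + 4^{1/3} + 4^{1/5}))` is not a rational
multiple of `π`. -/
theorem stmt12 :
    ¬ ∃ q : ℚ,
      2 * Real.arccos (1 / Real.sqrt (2 + (4 : ℝ) ^ ((1 : ℝ) / 3) + (4 : ℝ) ^ ((1 : ℝ) / 5)))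
        = (q : ℝ) * Real.pi := by
  rintro ⟨q, hq⟩
  set a : ℝ := 4 ^ ((1 : ℝ) / 3)
  set b : ℝ := 4 ^ ((1 : ℝ) / 5)
  have ha_nonneg : 0 ≤ a := by positivity
  have hb_nonneg : 0 ≤ b := by positivity
  have ha : a ^ 3 = 4 := by simpa [a] using rpow_inv_natCast_pow (n := 3) zero_le_four three_ne_zero
  have hb : b ^ 5 = 4 := by simpa [b] using rpow_inv_natCast_pow (n := 5) zero_le_four (by simp)
  have hba : |b| < a * sin (2 * π / (3 : ℕ)) := by
    rw [abs_of_nonneg hb_nonneg]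
    exact lt_mul_sin_two_pi_div_three ha_nonneg ha hb
  have h_mem : 2 + a + b ∈ totallyRealNumbers :=
    mem_totallyRealNumbers_of_two_mul_arccos_one_div_sqrt (by linarith) hq
  have hab : a + b ∈ totallyRealNumbers := by
    convert! sub_mem h_mem (ofNat_mem totallyRealNumbers 2) using 1
    ring
  exact add_notMem_totallyRealNumbers Nat.prime_three (n := 5) (by simp) (d := 4) (e := 4)
    rat_pow_three_ne_four (mod_cast ha) (mod_cast hb) hba hab
end

section
/- Let v = (1, 2^{1/3}, 2^{1/5}) ∈ ℝ³. If x and y are distinct unit vectors in ℝ³ (Euclidean norm 1) each of which is a real scalar multiple of a vector with rational coordinates, then the Euclidean inner products ⟨x, v⟩ and ⟨y, v⟩ are distinct: x_1 + x_2·2^{1/3} + x_3·2^{1/5} ≠ y_1 + y_2·2^{1/3} + y_3·2^{1/5}. -/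
/-!
Expanding `(∑ i, x i * v i) ^ 2` over unordered pairs of indices turns an equality
`∑ i, x i * v i = ∑ i, y i * v i` into a linear relation between the products `v i * v j`, and the
coefficients `x i * x j`, `y i * y j` of this relation are rational: a unit vector `c • q` with `q`
rational has `c ^ 2` rational, although `c` need not be. If the products `v i * v j` are linearly
independent over `ℚ`, then `x i * x j = y i * y j` for all `i` and `j`. Weighting by `v j` and
summing over `j` gives `x i * S = y i * S`, where `S` is the common value of the two sums; if
`S = 0`, comparing `x` and `y` with the zero vector in the same way shows that both vanish.
For `v = (1, 2 ^ (1 / 3), 2 ^ (1 / 5))` the products are powers of `2 ^ (1 / 15)` with the distinct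
exponents `0, 3, 5, 6, 8, 10`, all less than the degree `15` of its minimal polynomial
`X ^ 15 - 2`.
-/

open Finset Polynomial

section SymmetricSquare

theorem sq_sum_mul_eq_sum_sym2 {ι R : Type*} [Fintype ι] [DecidableEq ι] [CommSemiring R]
    (x v : ι → R) :
    (∑ i, x i * v i) ^ 2 =
      ∑ z : Sym2 ι, #{p : ι × ι | s(p.1, p.2) = z} * (z.map x).mul * (z.map v).mul := by
  have expand : (∑ i, x i * v i) ^ 2 =
      ∑ p : ι × ι, (s(p.1, p.2).map x).mul * (s(p.1, p.2).map v).mul := by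
    simp only [sq, sum_mul_sum, ← univ_product_univ, sum_product, Sym2.map_mk, Sym2.mul_mk,
      mul_mul_mul_comm]
  rw [expand, ← sum_fiberwise' univ (fun p : ι × ι ↦ s(p.1, p.2))
    (fun z ↦ (z.map x).mul * (z.map v).mul)]
  simp only [sum_const, nsmul_eq_mul, mul_assoc]

variable {ι K L : Type*} [Fintype ι] [CommRing K] [IsDomain K] [CharZero K] [CommRing L]
  [Algebra K L] {v x y : ι → L}

theorem mul_eq_mul_of_sq_sum_mul_eq
    (hv : LinearIndependent K fun z : Sym2 ι ↦ (z.map v).mul)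
    (hx : ∀ i j, x i * x j ∈ (algebraMap K L).range)
    (hy : ∀ i j, y i * y j ∈ (algebraMap K L).range)
    (h : (∑ i, x i * v i) ^ 2 = (∑ i, y i * v i) ^ 2) (i j : ι) :
    x i * x j = y i * y j := by
  classical
  choose a ha using fun z : Sym2 ι ↦
    show ∃ r, algebraMap K L r = (z.map x).mul from z.ind fun i j ↦ hx i j
  choose b hb using fun z : Sym2 ι ↦
    show ∃ r, algebraMap K L r = (z.map y).mul from z.ind fun i j ↦ hy i j
  have coeff_eq : ∀ z, (#{p : ι × ι | s(p.1, p.2) = z} : K) * a z =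
      #{p : ι × ι | s(p.1, p.2) = z} * b z := by
    refine Fintype.linearIndependent_iffₛ.1 hv _ _ ?_
    simpa only [Algebra.smul_def, map_mul, map_natCast, ha, hb, ← sq_sum_mul_eq_sum_sym2] using h
  have card_ne_zero : (#{p : ι × ι | s(p.1, p.2) = s(i, j)} : K) ≠ 0 :=
    Nat.cast_ne_zero.2 (card_ne_zero_of_mem (mem_filter.2 ⟨mem_univ (i, j), rfl⟩))
  have hab : a s(i, j) = b s(i, j) := mul_left_cancel₀ card_ne_zero (coeff_eq s(i, j))
  simpa only [hab, hb, Sym2.map_mk, Sym2.mul_mk] using (ha s(i, j)).symm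

variable [IsDomain L]

theorem eq_zero_of_sum_mul_eq_zero
    (hv : LinearIndependent K fun z : Sym2 ι ↦ (z.map v).mul)
    (hx : ∀ i j, x i * x j ∈ (algebraMap K L).range) (h : ∑ i, x i * v i = 0) : x = 0 := by
  funext i
  have hxx : x i * x i = (0 : ι → L) i * (0 : ι → L) i :=
    mul_eq_mul_of_sq_sum_mul_eq hv hx (by simp) (by simp [h]) i i
  simpa using hxx

theorem eq_of_sum_mul_eq
    (hv : LinearIndependent K fun z : Sym2 ι ↦ (z.map v).mul)
    (hx : ∀ i j, x i * x j ∈ (algebraMap K L).range)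
    (hy : ∀ i j, y i * y j ∈ (algebraMap K L).range)
    (h : ∑ i, x i * v i = ∑ i, y i * v i) : x = y := by
  by_cases hS : ∑ i, y i * v i = 0
  · rw [eq_zero_of_sum_mul_eq_zero hv hx (h.trans hS), eq_zero_of_sum_mul_eq_zero hv hy hS]
  · have products_eq := mul_eq_mul_of_sq_sum_mul_eq hv hx hy (congrArg (· ^ 2) h)
    funext i
    refine mul_right_cancel₀ hS ?_
    calc x i * ∑ j, y j * v j = ∑ j, x i * x j * v j := by simp only [← h, mul_sum, mul_assoc]
      _ = ∑ j, y i * y j * v j := by simp only [products_eq]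
      _ = y i * ∑ j, y j * v j := by simp only [mul_sum, mul_assoc]

end SymmetricSquare

theorem mul_mem_range_algebraMap_of_sum_sq_mem {ι K L : Type*} [Fintype ι] [Field K] [Field L]
    [LinearOrder L] [IsStrictOrderedRing L] [Algebra K L] {x : ι → L}
    (hsq : ∑ i, x i ^ 2 ∈ (algebraMap K L).range)
    (hx : ∃ (c : L) (q : ι → K), ∀ i, x i = c * algebraMap K L (q i)) (i j : ι) :
    x i * x j ∈ (algebraMap K L).range := by
  obtain ⟨c, q, hq⟩ := hx
  obtain ⟨r, hr⟩ := hsq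
  by_cases hsum : ∑ k, algebraMap K L (q k) ^ 2 = 0
  · have hqi : algebraMap K L (q i) = 0 := pow_eq_zero_iff two_ne_zero |>.1 <|
      (sum_eq_zero_iff_of_nonneg fun k _ ↦ sq_nonneg _).1 hsum i (mem_univ i)
    simp [hq, hqi]
  · have hc : c ^ 2 = algebraMap K L (r / ∑ k, q k ^ 2) := by
      simp only [map_div₀, map_sum, map_pow, hr, eq_div_iff hsum, hq, mul_pow, mul_sum]
    refine ⟨r / (∑ k, q k ^ 2) * (q i * q j), ?_⟩
    rw [map_mul, ← hc, map_mul, hq, hq]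
    ring

theorem linearIndependent_sym2_mul_pow {ι K L : Type*} [Field K] [CommRing L] [Algebra K L]
    {t : L} {e : ι → ℕ} (he : Function.Injective fun z : Sym2 ι ↦ (z.map e).add)
    (hlt : ∀ z : Sym2 ι, (z.map e).add < (minpoly K t).natDegree) :
    LinearIndependent K fun z : Sym2 ι ↦ (z.map fun i ↦ t ^ e i).mul := by
  have hinj : Function.Injective fun z ↦ (⟨_, hlt z⟩ : Fin (minpoly K t).natDegree) :=
    fun _ _ h ↦ he (congrArg Fin.val h)
  convert (linearIndependent_pow t).comp _ hinj using 1
  ext ⟨i, j⟩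
  exact (pow_add t (e i) (e j)).symm

theorem irreducible_X_pow_sub_C_of_prime_coeff {R : Type*} [CommRing R] [IsDomain R] {p : R}
    (hp : Prime p) {n : ℕ} (hn : n ≠ 0) : Irreducible (X ^ n - C p) := by
  have hprime : (Ideal.span {p}).IsPrime := (Ideal.span_singleton_prime hp.ne_zero).2 hp
  have hmonic : (X ^ n - C p).Monic := monic_X_pow_sub_C p hn
  refine IsEisensteinAt.irreducible (𝓟 := Ideal.span {p}) ⟨?_, fun {k} hk ↦ ?_, ?_⟩ hprime
    hmonic.isPrimitive (by rw [natDegree_X_pow_sub_C]; exact Nat.pos_of_ne_zero hn)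
  · rw [hmonic.leadingCoeff]
    exact hprime.one_notMem
  · rw [natDegree_X_pow_sub_C] at hk
    rw [coeff_sub, coeff_X_pow, if_neg hk.ne, zero_sub, neg_mem_iff, coeff_C]
    split_ifs
    exacts [Ideal.mem_span_singleton_self p, zero_mem _]
  · rw [coeff_sub, coeff_X_pow, if_neg hn.symm, coeff_C_zero, zero_sub, neg_mem_iff,
      Ideal.span_singleton_pow, Ideal.mem_span_singleton]
    exact fun h ↦ hp.not_isUnit (isUnit_of_dvd_one <|
      (mul_dvd_mul_iff_left hp.ne_zero).1 (by rwa [← sq, mul_one]))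

theorem natDegree_minpoly_of_pow_eq_prime {R K L : Type*} [CommRing R] [IsDomain R]
    [IsIntegrallyClosed R] [Field K] [Algebra R K] [IsFractionRing R K] [CommRing L] [Nontrivial L]
    [Algebra K L] {p : R} (hp : Prime p) {n : ℕ} (hn : n ≠ 0) {t : L}
    (ht : t ^ n = algebraMap K L (algebraMap R K p)) : (minpoly K t).natDegree = n := by
  have hirr : Irreducible (X ^ n - C (algebraMap R K p)) := by
    simpa using (monic_X_pow_sub_C p hn).irreducible_iff_irreducible_map_fraction_map (K := K) |>.1
      (irreducible_X_pow_sub_C_of_prime_coeff hp hn)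
  rw [← minpoly.eq_of_irreducible_of_monic hirr (by simp [ht]) (monic_X_pow_sub_C _ hn),
    natDegree_X_pow_sub_C]

theorem linearIndependent_sym2_mul_two_rpow : LinearIndependent ℚ fun z : Sym2 (Fin 3) ↦
    (z.map ![1, (2 : ℝ) ^ ((1 : ℝ) / 3), (2 : ℝ) ^ ((1 : ℝ) / 5)]).mul := by
  have rpow_pow (k : ℕ) : ((2 : ℝ) ^ ((1 : ℝ) / 15)) ^ k = 2 ^ ((k : ℝ) / 15) := by
    rw [← Real.rpow_mul_natCast zero_le_two, one_div_mul_eq_div]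
  have hdeg : (minpoly ℚ ((2 : ℝ) ^ ((1 : ℝ) / 15))).natDegree = 15 :=
    natDegree_minpoly_of_pow_eq_prime Int.prime_two (by decide) (by rw [rpow_pow]; norm_num)
  have hv : ![1, (2 : ℝ) ^ ((1 : ℝ) / 3), (2 : ℝ) ^ ((1 : ℝ) / 5)] =
      fun i ↦ ((2 : ℝ) ^ ((1 : ℝ) / 15)) ^ ![0, 5, 3] i := by
    ext i
    rw [rpow_pow]
    fin_cases i <;> norm_num
  rw [hv]
  exact linearIndependent_sym2_mul_pow (by decide) (by rw [hdeg]; decide)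

theorem stmt15_general {ι K : Type*} [Fintype ι] [Field K] [Algebra K ℝ] {v : ι → ℝ}
    (hv : LinearIndependent K fun z : Sym2 ι ↦ (z.map v).mul) (x y : EuclideanSpace ℝ ι)
    (hx : ‖x‖ ^ 2 ∈ (algebraMap K ℝ).range) (hy : ‖y‖ ^ 2 ∈ (algebraMap K ℝ).range) (hxy : x ≠ y)
    (hxq : ∃ (c : ℝ) (q : ι → K), ∀ i, x i = c * algebraMap K ℝ (q i))
    (hyq : ∃ (c : ℝ) (q : ι → K), ∀ i, y i = c * algebraMap K ℝ (q i)) :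
    ∑ i, x i * v i ≠ ∑ i, y i * v i := by
  have : CharZero K := (algebraMap K ℝ).charZero
  rw [EuclideanSpace.real_norm_sq_eq] at hx hy
  exact fun h ↦ hxy <| WithLp.ofLp_injective 2 <| eq_of_sum_mul_eq hv
    (mul_mem_range_algebraMap_of_sum_sq_mem hx hxq)
    (mul_mem_range_algebraMap_of_sum_sq_mem hy hyq) h

/-- if `x ≠ y` are unit vectors in `ℝ³`, each a real scalar multiple
of a rational vector, then their Euclidean inner products with
`v = (1, 2^{1/3}, 2^{1/5})` differ. -/
theorem stmt15 (x y : EuclideanSpace ℝ (Fin 3))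
    (hx : ‖x‖ = 1) (hy : ‖y‖ = 1) (hxy : x ≠ y)
    (hxq : ∃ (c : ℝ) (q : Fin 3 → ℚ), ∀ i, x i = c * (q i : ℝ))
    (hyq : ∃ (c : ℝ) (q : Fin 3 → ℚ), ∀ i, y i = c * (q i : ℝ)) :
    x 0 + x 1 * (2 : ℝ) ^ ((1 : ℝ) / 3) + x 2 * (2 : ℝ) ^ ((1 : ℝ) / 5) ≠
      y 0 + y 1 * (2 : ℝ) ^ ((1 : ℝ) / 3) + y 2 * (2 : ℝ) ^ ((1 : ℝ) / 5) := by
  simpa [Fin.sum_univ_three] using stmt15_general linearIndependent_sym2_mul_two_rpow x y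
    ⟨1, by simp [hx]⟩ ⟨1, by simp [hy]⟩ hxy hxq hyq
end

section
/- Let n, k ∈ ℕ and let g : (ℝⁿ) × ℝ × ℝᵏ → ℝ be an arbitrary real-valued function. Then for every x̄ ∈ ℝⁿ, the following identity holds in the extended reals ℝ̄: inf_{y ∈ ℤ} sup_{z̄ ∈ ℤᵏ} g(x̄, y, z̄) = inf_{y ∈ ℝ} sup_{(β, z̄) ∈ ℝ × ℝᵏ} inf_{γ ∈ ℝ} [ g(x̄, y, z̄) + β²·sin²(π y) − γ²·Σ_{i=1}^{k} sin²(π z_i) ], where on the left-hand side y ranges over the integers and z̄ over integer vectors (coerced into ℝ and ℝᵏ). -/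
open scoped BigOperators

/-! A constraint can be traded for a penalty whose multiplier is played by the opponent. If `ψ`
vanishes on `T` and is positive off `T`, then `inf_γ (h z - γ² ψ z)` is `h z` on `T` and `-∞` off
`T`, so a maximizing player may as well stay in `T`. Dually `sup_β (h y + β² φ y)` confines a
minimizing player to the zero set of `φ`. Since `β` and `z` are chosen by the same player, the two
suprema commute and the effects can be separated. Integrality is the case
`φ y = sin² (π y)`, `ψ z = ∑ᵢ sin² (π zᵢ)`. -/

/-- A penalty function for the constraint set `S`: it vanishes on `S` and is positive off `S`, so
that an unbounded multiple of it forbids leaving `S`. -/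
structure IsPenalty {α : Type*} (φ : α → ℝ) (S : Set α) : Prop where
  eq_zero_of_mem : ∀ x ∈ S, φ x = 0
  pos_of_notMem : ∀ x ∉ S, 0 < φ x

section CompleteLattice

variable {α L : Type*} [CompleteLattice L] {F : α → L} {S : Set α}

theorem iSup_eq_biSup_of_eq_bot (hF : ∀ x ∉ S, F x = ⊥) : ⨆ x, F x = ⨆ x ∈ S, F x := by
  rw [iSup_split F (· ∈ S), iSup₂_eq_bot.2 hF, sup_bot_eq]

theorem iInf_eq_biInf_of_eq_top (hF : ∀ x ∉ S, F x = ⊤) : ⨅ x, F x = ⨅ x ∈ S, F x :=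
  iSup_eq_biSup_of_eq_bot (L := Lᵒᵈ) hF

end CompleteLattice

section Multiplier

variable {s : ℝ}

theorem tendsto_const_add_sq_mul_atTop (a : ℝ) (hs : 0 < s) :
    Filter.Tendsto (fun β : ℝ => a + β ^ 2 * s) Filter.atTop Filter.atTop :=
  Filter.tendsto_atTop_add_const_left _ a <|
    (Filter.tendsto_pow_atTop two_ne_zero).atTop_mul_const hs

theorem iSup_coe_add_sq_mul_eq_top (a : ℝ) (hs : 0 < s) :
    ⨆ β : ℝ, ((a + β ^ 2 * s : ℝ) : EReal) = ⊤ := by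
  refine (EReal.eq_top_iff_forall_lt _).2 fun c => ?_
  obtain ⟨β, hβ⟩ := ((tendsto_const_add_sq_mul_atTop a hs).eventually_gt_atTop c).exists
  exact lt_iSup_iff.2 ⟨β, EReal.coe_lt_coe_iff.2 hβ⟩

theorem iInf_coe_sub_sq_mul_eq_bot (a : ℝ) (hs : 0 < s) :
    ⨅ γ : ℝ, ((a - γ ^ 2 * s : ℝ) : EReal) = ⊥ := by
  refine (EReal.eq_bot_iff_forall_lt _).2 fun c => ?_
  obtain ⟨γ, hγ⟩ := ((tendsto_const_add_sq_mul_atTop (-a) hs).eventually_gt_atTop (-c)).exists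
  exact iInf_lt_iff.2 ⟨γ, EReal.coe_lt_coe_iff.2 (by linarith)⟩

end Multiplier

namespace IsPenalty

variable {Y Z : Type*} {φ : Y → ℝ} {ψ : Z → ℝ} {S : Set Y} {T : Set Z}

theorem iSup_iInf_sub (hψ : IsPenalty ψ T) (h : Z → ℝ) :
    ⨆ z, ⨅ γ : ℝ, ((h z - γ ^ 2 * ψ z : ℝ) : EReal) = ⨆ z ∈ T, (h z : EReal) := by
  rw [iSup_eq_biSup_of_eq_bot fun z hz =>
    iInf_coe_sub_sq_mul_eq_bot (h z) (hψ.pos_of_notMem z hz)]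
  refine biSup_congr fun z hz => ?_
  simp only [hψ.eq_zero_of_mem z hz, mul_zero, sub_zero, iInf_const]

theorem iInf_iSup_add (hφ : IsPenalty φ S) (hT : T.Nonempty) (f : Y → Z → ℝ) :
    ⨅ y, ⨆ z ∈ T, ⨆ β : ℝ, ((f y z + β ^ 2 * φ y : ℝ) : EReal) =
      ⨅ y ∈ S, ⨆ z ∈ T, (f y z : EReal) := by
  have eq_top_off : ∀ y ∉ S, ⨆ z ∈ T, ⨆ β : ℝ, ((f y z + β ^ 2 * φ y : ℝ) : EReal) = ⊤ :=
    fun y hy => by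
      simp only [iSup_coe_add_sq_mul_eq_top _ (hφ.pos_of_notMem y hy), biSup_const hT]
  rw [iInf_eq_biInf_of_eq_top eq_top_off]
  refine biInf_congr fun y hy => ?_
  simp only [hφ.eq_zero_of_mem y hy, mul_zero, add_zero, iSup_const]

theorem sum_pi {ι : Type*} [Fintype ι] {α : ι → Type*} {φ : ∀ i, α i → ℝ} {S : ∀ i, Set (α i)}
    (hφ : ∀ i, IsPenalty (φ i) (S i)) :
    IsPenalty (fun z => ∑ i, φ i (z i)) (Set.univ.pi S) where
  eq_zero_of_mem z hz := Finset.sum_eq_zero fun i _ => (hφ i).eq_zero_of_mem _ (hz i trivial)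
  pos_of_notMem z hz := by
    have nonneg (i : ι) : 0 ≤ φ i (z i) := by
      by_cases hi : z i ∈ S i
      · exact ((hφ i).eq_zero_of_mem _ hi).ge
      · exact ((hφ i).pos_of_notMem _ hi).le
    obtain ⟨i, hi⟩ : ∃ i, z i ∉ S i := by simpa only [Set.mem_univ_pi, not_forall] using hz
    exact Finset.sum_pos' (fun i _ => nonneg i)
      ⟨i, Finset.mem_univ i, (hφ i).pos_of_notMem _ hi⟩

end IsPenalty

theorem sin_pi_mul_eq_zero_iff {y : ℝ} :
    Real.sin (Real.pi * y) = 0 ↔ y ∈ Set.range ((↑) : ℤ → ℝ) := by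
  simp only [Real.sin_eq_zero_iff, mul_comm Real.pi, mul_left_inj' Real.pi_ne_zero, Set.mem_range]

theorem isPenalty_sin_pi_mul_sq :
    IsPenalty (fun y => Real.sin (Real.pi * y) ^ 2) (Set.range ((↑) : ℤ → ℝ)) where
  eq_zero_of_mem _ hy := by rw [sin_pi_mul_eq_zero_iff.2 hy, zero_pow two_ne_zero]
  pos_of_notMem _ hy := sq_pos_of_ne_zero (mt sin_pi_mul_eq_zero_iff.1 hy)

theorem isPenalty_sum_sin_pi_mul_sq (ι : Type*) [Fintype ι] :
    IsPenalty (fun z : ι → ℝ => ∑ i, Real.sin (Real.pi * z i) ^ 2)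
      (Set.range fun (z : ι → ℤ) i => (z i : ℝ)) := by
  have range_eq_pi : (Set.range fun (z : ι → ℤ) i => (z i : ℝ)) =
      Set.univ.pi fun _ => Set.range ((↑) : ℤ → ℝ) := Set.range_piMap fun _ => ((↑) : ℤ → ℝ)
  rw [range_eq_pi]
  exact IsPenalty.sum_pi fun _ => isPenalty_sin_pi_mul_sq

theorem stmt17_general {Y Z : Type*} {φ : Y → ℝ} {ψ : Z → ℝ} {S : Set Y} {T : Set Z}
    (hφ : IsPenalty φ S) (hψ : IsPenalty ψ T) (hT : T.Nonempty) (f : Y → Z → ℝ) :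
    ⨅ y ∈ S, ⨆ z ∈ T, (f y z : EReal) =
      ⨅ y, ⨆ p : ℝ × Z, ⨅ γ : ℝ, ((f y p.2 + p.1 ^ 2 * φ y - γ ^ 2 * ψ p.2 : ℝ) : EReal) := by
  rw [← hφ.iInf_iSup_add hT]
  refine iInf_congr fun y => ?_
  calc ⨆ z ∈ T, ⨆ β : ℝ, ((f y z + β ^ 2 * φ y : ℝ) : EReal)
      = ⨆ β : ℝ, ⨆ z ∈ T, ((f y z + β ^ 2 * φ y : ℝ) : EReal) := by
        simp only [iSup_comm (ι' := ℝ)]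
    _ = ⨆ β : ℝ, ⨆ z, ⨅ γ : ℝ, ((f y z + β ^ 2 * φ y - γ ^ 2 * ψ z : ℝ) : EReal) :=
        iSup_congr fun β => (hψ.iSup_iInf_sub fun z => f y z + β ^ 2 * φ y).symm
    _ = _ := by rw [iSup_prod]

/-- for any `g : ℝⁿ × ℝ × ℝᵏ → ℝ` and `x̄ ∈ ℝⁿ`, in the extended
reals `inf_{y ∈ ℤ} sup_{z̄ ∈ ℤᵏ} g(x̄,y,z̄)` equals
`inf_{y ∈ ℝ} sup_{(β,z̄) ∈ ℝ × ℝᵏ} inf_{γ ∈ ℝ}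
  [g(x̄,y,z̄) + β²·sin²(πy) − γ²·Σᵢ sin²(π zᵢ)]`. -/
theorem stmt17 (n k : ℕ) (g : (Fin n → ℝ) → ℝ → (Fin k → ℝ) → ℝ) (x : Fin n → ℝ) :
    (⨅ y : ℤ, ⨆ z : Fin k → ℤ, ((g x (y : ℝ) fun i => (z i : ℝ) : ℝ) : EReal)) =
      ⨅ y : ℝ, ⨆ p : ℝ × (Fin k → ℝ), ⨅ γ : ℝ,
        ((g x y p.2 + p.1 ^ 2 * Real.sin (Real.pi * y) ^ 2 -
            γ ^ 2 * ∑ i : Fin k, Real.sin (Real.pi * p.2 i) ^ 2 : ℝ) : EReal) := by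
  simpa only [iInf_range, iSup_range] using stmt17_general isPenalty_sin_pi_mul_sq
    (isPenalty_sum_sin_pi_mul_sq (Fin k)) (Set.range_nonempty _) (g x)
end

section
/- Let k ∈ ℕ and let U₀ ⊆ ℝᵏ × ℕ be a set such that for every n ∈ ℕ the section {x̄ ∈ ℝᵏ : (x̄, n) ∈ U₀} is open (i.e. U₀ is open in ℝᵏ × ℕ with ℕ discrete). Then there exists an open set U ⊆ ℝᵏ × ℝ such that for every x̄ ∈ ℝᵏ: ((x̄, n) ∈ U₀ for every n ∈ ℕ) if and only if ((x̄, y) ∈ U for every y ∈ ℝ). -/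
/-!
The points `x` for which some `(x, n)` lies outside `U₀` form the projection of the closed set `U₀ᶜ`
to `ℝᵏ`. Pushing `U₀ᶜ` forward along the inclusion `ℝᵏ × ℕ → ℝᵏ × ℝ` does not change this
projection, and the image stays closed because `ℕ → ℝ` is proper. So `U` can be taken to be the
complement of that image, which is the kernel image of `U₀`.
-/

section Topology

variable {X Y Z : Type*} [TopologicalSpace X] [TopologicalSpace Y] [TopologicalSpace Z]

theorem isOpen_prod_iff_of_discrete_right [DiscreteTopology Z] {s : Set (X × Z)} :
    IsOpen s ↔ ∀ z, IsOpen {x | (x, z) ∈ s} := by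
  simp only [isOpen_iff_continuous_mem, continuous_prod_of_discrete_right, Set.mem_ofPred_eq]

theorem isOpen_kernImage_prodMap_id {f : Z → Y} (hf : IsProperMap f)
    {s : Set (X × Z)} (hs : IsOpen s) : IsOpen (Set.kernImage (Prod.map id f) s) :=
  isClosedMap_iff_kernImage.mp (isProperMap_id.prodMap hf).isClosedMap hs

end Topology

theorem forall_mem_kernImage_prodMap_id_iff {X Y Z : Type*} {f : Z → Y} {s : Set (X × Z)} {x : X} :
    (∀ y, (x, y) ∈ Set.kernImage (Prod.map id f) s) ↔ ∀ z, (x, z) ∈ s := by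
  constructor
  · intro h z
    exact h (f z) rfl
  · rintro h _ ⟨_, z⟩ ⟨⟩
    exact h z

theorem stmt18_general {X Y Z : Type*} [TopologicalSpace X] [TopologicalSpace Y]
    [TopologicalSpace Z] {f : Z → Y} (hf : IsProperMap f) {U₀ : Set (X × Z)} (hU₀ : IsOpen U₀) :
    ∃ U : Set (X × Y), IsOpen U ∧ ∀ x, (∀ z, (x, z) ∈ U₀) ↔ ∀ y, (x, y) ∈ U :=
  ⟨Set.kernImage (Prod.map id f) U₀, isOpen_kernImage_prodMap_id hf hU₀,
    fun _ => forall_mem_kernImage_prodMap_id_iff.symm⟩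

/-- if `U₀ ⊆ ℝᵏ × ℕ` has all sections over `n ∈ ℕ` open (i.e. `U₀`
is open for the product topology with `ℕ` discrete), then there is an open
`U ⊆ ℝᵏ × ℝ` such that for all `x̄`: `(x̄, n) ∈ U₀` for all `n ∈ ℕ` iff
`(x̄, y) ∈ U` for all `y ∈ ℝ`. -/
theorem stmt18 (k : ℕ) (U₀ : Set ((Fin k → ℝ) × ℕ))
    (h : ∀ n : ℕ, IsOpen {x : Fin k → ℝ | (x, n) ∈ U₀}) :
    ∃ U : Set ((Fin k → ℝ) × ℝ), IsOpen U ∧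
      ∀ x : Fin k → ℝ, (∀ n : ℕ, (x, n) ∈ U₀) ↔ (∀ y : ℝ, (x, y) ∈ U) :=
  stmt18_general Nat.isClosedEmbedding_coe_real.isProperMap
    (isOpen_prod_iff_of_discrete_right.mpr h)
end

section
/- For every n ∈ ℕ and every open set U ⊆ ℝⁿ, there is a function g : ℝⁿ × ℝ → ℝ that is real-analytic on all of ℝⁿ × ℝ such that for every x̄ ∈ ℝⁿ, the supremum sup_{y ∈ ℝ} g(x̄, y), computed in the extended reals ℝ̄, equals the indicator function value 1_U(x̄) (that is, it equals 1 if x̄ ∈ U and 0 if x̄ ∉ U). -/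
/-!
Write `U` as a countable union of balls with centers `c k` and radii `r k`. The numbers
`(r k ^ 2 - ‖x - c k‖ ^ 2) / (1 + r k ^ 2 + ‖c k‖ ^ 2)` are bounded in `k`, depend analytically on
`x` as an element of the Banach algebra of bounded sequences, and are positive for some `k` exactly
when `x ∈ U`. Put a probability measure charging every integer on `ℕ` and regard them as a random
variable `V x`. Its moment generating function `m = mgf (V x) μ t` is at most `1` for all `t ≥ 0`
if `x ∉ U` and grows exponentially in `t` if `x ∈ U`. Hence `(m - 1) / (m + t)` approaches its limit
from below in both cases: it is at most `1` and tends to `1` if `x ∈ U`, while it is at most `0` and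
tends to `0` if `x ∉ U`. Substituting `t = y ^ 2` gives the function sought.
-/

open Asymptotics BoundedContinuousFunction Filter MeasureTheory ProbabilityTheory Set Topology

theorem iSup_coe_comp_sq_eq_of_tendsto {f : ℝ → ℝ} {a : ℝ} (hle : ∀ t, 0 ≤ t → f t ≤ a)
    (hlim : Tendsto f atTop (𝓝 a)) : ⨆ y : ℝ, (f (y ^ 2) : EReal) = a :=
  iSup_eq_of_forall_le_of_tendsto (fun y ↦ EReal.coe_le_coe (hle _ (sq_nonneg y)))
    ((continuous_coe_real_ereal.tendsto a).comp (hlim.comp (tendsto_pow_atTop two_ne_zero)))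

section Mgf

variable {Ω : Type*} [MeasurableSpace Ω] {μ : Measure Ω} {X : Ω → ℝ} {t : ℝ}

theorem mgf_le_one_of_nonpos [IsProbabilityMeasure μ] (hX : ∀ᵐ ω ∂μ, X ω ≤ 0) (ht : 0 ≤ t) :
    mgf X μ t ≤ 1 :=
  calc mgf X μ t ≤ ∫ _, (1 : ℝ) ∂μ :=
        integral_mono_of_nonneg (.of_forall fun ω ↦ (Real.exp_pos _).le) (integrable_const 1)
          (hX.mono fun ω hω ↦ Real.exp_le_one_iff.2 (mul_nonpos_of_nonneg_of_nonpos ht hω))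
    _ = 1 := by simp

theorem isLittleO_pow_mgf_atTop [IsFiniteMeasure μ] {ε : ℝ} (hε : 0 < ε)
    (hμ : 0 < μ.real {ω | ε ≤ X ω})
    (h_int : ∀ t, 0 ≤ t → Integrable (fun ω ↦ Real.exp (t * X ω)) μ) (n : ℕ) :
    (fun t ↦ t ^ n) =o[atTop] mgf X μ := by
  refine (isLittleO_pow_exp_pos_mul_atTop n hε).trans_isBigO <|
    .of_bound (μ.real {ω | ε ≤ X ω})⁻¹ ?_
  filter_upwards [eventually_ge_atTop 0] with t ht
  have chernoff := measure_ge_le_exp_mul_mgf ε ht (h_int t ht)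
  rw [Real.norm_of_nonneg (Real.exp_pos _).le, Real.norm_of_nonneg mgf_nonneg,
    inv_mul_eq_div, le_div_iff₀ hμ]
  calc Real.exp (ε * t) * μ.real {ω | ε ≤ X ω}
      ≤ Real.exp (ε * t) * (Real.exp (-t * ε) * mgf X μ t) := by gcongr
    _ = mgf X μ t := by
      rw [← mul_assoc, ← Real.exp_add, neg_mul, mul_comm t, add_neg_cancel, Real.exp_zero, one_mul]

/-- A ratio which detects, as `t → ∞`, whether a random variable takes positive values: it
approaches `0` from below if `X ≤ 0` almost surely, and `1` from below otherwise. -/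
noncomputable def mgfIndicator (X : Ω → ℝ) (μ : Measure Ω) (t : ℝ) : ℝ :=
  (mgf X μ t - 1) / (mgf X μ t + t)

theorem mgfIndicator_le_one (ht : 0 ≤ t) : mgfIndicator X μ t ≤ 1 :=
  div_le_one_of_le₀ (by linarith) (add_nonneg mgf_nonneg ht)

theorem mgfIndicator_nonpos [IsProbabilityMeasure μ] (hX : ∀ᵐ ω ∂μ, X ω ≤ 0) (ht : 0 ≤ t) :
    mgfIndicator X μ t ≤ 0 :=
  div_nonpos_of_nonpos_of_nonneg (sub_nonpos.2 (mgf_le_one_of_nonpos hX ht))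
    (add_nonneg mgf_nonneg ht)

theorem tendsto_mgfIndicator_zero [IsProbabilityMeasure μ] (hX : ∀ᵐ ω ∂μ, X ω ≤ 0) :
    Tendsto (mgfIndicator X μ) atTop (𝓝 0) := by
  have hlower : ∀ᶠ t in atTop, -1 ≤ mgf X μ t - 1 :=
    .of_forall fun t ↦ by linarith [mgf_nonneg (X := X) (μ := μ) (t := t)]
  have hupper : ∀ᶠ t in atTop, mgf X μ t - 1 ≤ 0 :=
    (eventually_ge_atTop 0).mono fun t ht ↦ sub_nonpos.2 (mgf_le_one_of_nonpos hX ht)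
  exact tendsto_bdd_div_atTop_nhds_zero hlower hupper
    (tendsto_atTop_mono (fun t ↦ le_add_of_nonneg_left mgf_nonneg) tendsto_id)

theorem tendsto_mgfIndicator_one [IsFiniteMeasure μ] {ε : ℝ} (hε : 0 < ε)
    (hμ : 0 < μ.real {ω | ε ≤ X ω})
    (h_int : ∀ t, 0 ≤ t → Integrable (fun ω ↦ Real.exp (t * X ω)) μ) :
    Tendsto (mgfIndicator X μ) atTop (𝓝 1) := by
  have h_one := (isLittleO_pow_mgf_atTop hε hμ h_int 0).tendsto_div_nhds_zero
  have h_id := (isLittleO_pow_mgf_atTop hε hμ h_int 1).tendsto_div_nhds_zero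
  have hlim := (h_one.const_sub 1).div (h_id.const_add 1) (by norm_num)
  rw [sub_zero, add_zero, div_one] at hlim
  refine hlim.congr' ?_
  filter_upwards [eventually_ge_atTop 0] with t ht
  have hpos : 0 < mgf X μ t := mgf_pos' (by rintro rfl; simp at hμ) (h_int t ht)
  simp only [mgfIndicator, Pi.div_apply, pow_zero, pow_one]
  field_simp

theorem iSup_mgfIndicator_sq_eq_zero [IsProbabilityMeasure μ] (hX : ∀ᵐ ω ∂μ, X ω ≤ 0) :
    ⨆ y : ℝ, (mgfIndicator X μ (y ^ 2) : EReal) = 0 :=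
  iSup_coe_comp_sq_eq_of_tendsto (fun _ ↦ mgfIndicator_nonpos hX) (tendsto_mgfIndicator_zero hX)

end Mgf

section BoundedContinuous

variable {Ω : Type*} [TopologicalSpace Ω]

theorem coe_exp_bcf (f : Ω →ᵇ ℝ) (ω : Ω) : NormedSpace.exp f ω = Real.exp (f ω) := by
  let evalAt : (Ω →ᵇ ℝ) →ₐ[ℝ] ℝ := (ContinuousMap.evalAlgHom ℝ ℝ ω).comp (toContinuousMapₐ ℝ)
  rw [Real.exp_eq_exp_ℝ]
  exact NormedSpace.map_exp evalAt (evalCLM ℝ ω).continuous f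

variable [MeasurableSpace Ω] [OpensMeasurableSpace Ω] {μ : Measure Ω} [IsFiniteMeasure μ]

theorem integrable_exp_mul_bcf (f : Ω →ᵇ ℝ) (t : ℝ) :
    Integrable (fun ω ↦ Real.exp (t * f ω)) μ := by
  refine ((NormedSpace.exp (t • f)).integrable μ).congr (.of_forall fun ω ↦ ?_)
  simp only [coe_exp_bcf, coe_smul, smul_eq_mul]

theorem analyticAt_integral_bcf (f : Ω →ᵇ ℝ) :
    AnalyticAt ℝ (fun f : Ω →ᵇ ℝ ↦ ∫ ω, f ω ∂μ) f := by
  let integralCLM : (Ω →ᵇ ℝ) →L[ℝ] ℝ :=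
    LinearMap.mkContinuous
      { toFun := fun f ↦ ∫ ω, f ω ∂μ
        map_add' := fun f g ↦ integral_add (f.integrable μ) (g.integrable μ)
        map_smul' := fun a f ↦ integral_const_mul a f }
      (μ.real univ) (norm_integral_le_mul_norm μ)
  exact integralCLM.analyticAt f

theorem analyticAt_mgf_bcf {E : Type*} [NormedAddCommGroup E] [NormedSpace ℝ E]
    {V : E → (Ω →ᵇ ℝ)} {τ : E → ℝ} {x : E} (hV : AnalyticAt ℝ V x) (hτ : AnalyticAt ℝ τ x) :
    AnalyticAt ℝ (fun x ↦ mgf (V x) μ (τ x)) x := by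
  have hexp : AnalyticAt ℝ (fun x ↦ NormedSpace.exp (τ x • V x)) x :=
    (NormedSpace.exp_analytic (𝕂 := ℝ) _).comp (hτ.smul hV)
  simpa only [Function.comp_def, coe_exp_bcf, coe_smul, smul_eq_mul, mgf]
    using (analyticAt_integral_bcf (μ := μ) _).comp hexp

theorem analyticAt_mgfIndicator_sq [NeZero μ] {E : Type*} [NormedAddCommGroup E]
    [NormedSpace ℝ E] {V : E → (Ω →ᵇ ℝ)} {p : E × ℝ} (hV : AnalyticAt ℝ V p.1) :
    AnalyticAt ℝ (fun p : E × ℝ ↦ mgfIndicator (V p.1) μ (p.2 ^ 2)) p := by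
  have hsq : AnalyticAt ℝ (fun p : E × ℝ ↦ p.2 ^ 2) p := analyticAt_snd.pow 2
  have hmgf : AnalyticAt ℝ (fun p : E × ℝ ↦ mgf (V p.1) μ (p.2 ^ 2)) p :=
    analyticAt_mgf_bcf (V := fun p : E × ℝ ↦ V p.1) (hV.comp analyticAt_fst) hsq
  have hpos : 0 < mgf (V p.1) μ (p.2 ^ 2) := mgf_pos_iff.2 (integrable_exp_mul_bcf _ _)
  exact (hmgf.sub analyticAt_const).div (hmgf.add hsq) (by positivity)

theorem iSup_mgfIndicator_sq_eq_one [μ.IsOpenPosMeasure] {f : Ω →ᵇ ℝ}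
    {ω : Ω} (hω : 0 < f ω) : ⨆ y : ℝ, (mgfIndicator f μ (y ^ 2) : EReal) = 1 := by
  have hopen : IsOpen {ω' | f ω / 2 < f ω'} := isOpen_lt continuous_const f.continuous
  have hprob : 0 < μ.real {ω' | f ω / 2 ≤ f ω'} :=
    ENNReal.toReal_pos ((hopen.measure_pos μ ⟨ω, half_lt_self hω⟩).trans_le <|
      measure_mono (ofPred_subset_ofPred.2 fun _ ↦ le_of_lt)).ne' (measure_ne_top _ _)
  exact_mod_cast iSup_coe_comp_sq_eq_of_tendsto (fun _ ↦ mgfIndicator_le_one)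
    (tendsto_mgfIndicator_one (half_pos hω) hprob fun t _ ↦ integrable_exp_mul_bcf f t)

end BoundedContinuous

theorem isOpenPosMeasure_geometricMeasure {p : unitInterval} (h0 : p ≠ 0) (h1 : p ≠ 1) :
    (geometricMeasure p).IsOpenPosMeasure where
  open_pos := by
    rintro s - ⟨k, hk⟩ hs
    have hk0 : geometricMeasure p {k} = 0 := measure_mono_null (singleton_subset_iff.2 hk) hs
    simpa [measureReal_def, hk0] using geometricMeasure_real_singleton_pos h0 h1 k

section InnerProductSpace

variable {E : Type*} [NormedAddCommGroup E] [InnerProductSpace ℝ E]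

/-- The map `x ↦ ⟪x, u ·⟫` attached to a bounded family `u` of vectors, as a continuous linear map
into the bounded functions. -/
noncomputable def boundedInnerCLM {Ω : Type*} [TopologicalSpace Ω] (u : Ω →ᵇ E) :
    E →L[ℝ] (Ω →ᵇ ℝ) :=
  LinearMap.mkContinuous
    { toFun := fun x ↦ (innerSL ℝ x).compLeftContinuousBounded Ω u
      map_add' := fun x y ↦ by ext ω; simp
      map_smul' := fun a x ↦ by ext ω; simp }
    ‖u‖ fun x ↦ (norm_le (by positivity)).2 fun ω ↦
      calc ‖inner ℝ x (u ω)‖ ≤ ‖x‖ * ‖u ω‖ := norm_inner_le_norm x (u ω)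
        _ ≤ ‖u‖ * ‖x‖ := by rw [mul_comm]; gcongr; exact u.norm_coe_le_norm ω

theorem boundedInnerCLM_apply {Ω : Type*} [TopologicalSpace Ω] (u : Ω →ᵇ E) (x : E) (ω : Ω) :
    boundedInnerCLM u x ω = inner ℝ x (u ω) :=
  rfl

theorem exists_analyticAt_eq_normalized_sq_sub_norm_sub_sq {ι : Type*} [TopologicalSpace ι]
    [DiscreteTopology ι] (c : ι → E) (r : ι → ℝ) :
    ∃ V : E → (ι →ᵇ ℝ), (∀ x, AnalyticAt ℝ V x) ∧
      ∀ x i, V x i = (r i ^ 2 - ‖x - c i‖ ^ 2) / (1 + r i ^ 2 + ‖c i‖ ^ 2) := by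
  let N i := 1 + r i ^ 2 + ‖c i‖ ^ 2
  have hN i : 0 < N i := by positivity
  let A : ι →ᵇ ℝ := ofNormedAddCommGroupDiscrete (fun i ↦ (r i ^ 2 - ‖c i‖ ^ 2) / N i) 1 fun i ↦ by
    rw [Real.norm_eq_abs, abs_div, abs_of_pos (hN i), div_le_one (hN i), abs_le]
    constructor <;> simp only [N] <;> nlinarith [sq_nonneg (r i), sq_nonneg ‖c i‖]
  let B : ι →ᵇ ℝ := ofNormedAddCommGroupDiscrete (fun i ↦ 1 / N i) 1 fun i ↦ by
    rw [Real.norm_of_nonneg (by positivity), div_le_one (hN i)]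
    simp only [N]
    nlinarith [sq_nonneg (r i), sq_nonneg ‖c i‖]
  let u : ι →ᵇ E := ofNormedAddCommGroupDiscrete (fun i ↦ (2 / N i) • c i) 1 fun i ↦ by
    rw [norm_smul, Real.norm_of_nonneg (by positivity), div_mul_eq_mul_div, div_le_one (hN i)]
    simp only [N]
    nlinarith [sq_nonneg (r i), sq_nonneg (‖c i‖ - 1)]
  refine ⟨fun x ↦ A + boundedInnerCLM u x - ‖x‖ ^ 2 • B, fun x ↦ ?_, fun x i ↦ ?_⟩
  · have hnorm : AnalyticAt ℝ (fun x : E ↦ ‖x‖ ^ 2) x :=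
      (contDiff_norm_sq ℝ).contDiffAt.analyticAt
    exact (analyticAt_const.add ((boundedInnerCLM u).analyticAt x)).sub
      (hnorm.smul analyticAt_const)
  · calc (A + boundedInnerCLM u x - ‖x‖ ^ 2 • B) i
        = (r i ^ 2 - ‖c i‖ ^ 2) / N i + 2 / N i * inner ℝ x (c i) - ‖x‖ ^ 2 * (1 / N i) := by
          simp [A, B, u, boundedInnerCLM_apply, real_inner_smul_right]
      _ = (r i ^ 2 - ‖x - c i‖ ^ 2) / N i := by rw [norm_sub_sq_real]; ring

end InnerProductSpace

theorem exists_eq_iUnion_ball_of_isOpen {E : Type*} [PseudoMetricSpace E]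
    [SecondCountableTopology E] [Nonempty E] {U : Set E} (hU : IsOpen U) :
    ∃ (c : ℕ → E) (r : ℕ → ℝ), (∀ k, 0 ≤ r k) ∧ U = ⋃ k, Metric.ball (c k) (r k) := by
  let I : Set (E × ℝ) := {b | 0 ≤ b.2 ∧ Metric.ball b.1 b.2 ⊆ U}
  obtain ⟨T, hTI, hT, hTU⟩ := TopologicalSpace.isOpen_biUnion_countable I
    (fun b ↦ Metric.ball b.1 b.2) fun b _ ↦ Metric.isOpen_ball
  -- The empty ball of radius `0` is added so that there is something to enumerate if `U = ∅`.
  obtain ⟨b, hb⟩ := (hT.insert (Classical.arbitrary E, 0)).exists_eq_range (insert_nonempty _ _)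
  have hbI k : b k ∈ I := by
    have hk : b k ∈ insert (Classical.arbitrary E, 0) T := hb ▸ mem_range_self k
    rcases hk with hk | hk
    · simp [hk, I]
    · exact hTI hk
  refine ⟨fun k ↦ (b k).1, fun k ↦ (b k).2, fun k ↦ (hbI k).1,
    Subset.antisymm (fun x hx ↦ ?_) (iUnion_subset fun k ↦ (hbI k).2)⟩
  obtain ⟨ε, hε, hball⟩ := Metric.isOpen_iff.1 hU x hx
  have hxT : x ∈ ⋃ i ∈ T, Metric.ball i.1 i.2 := by
    rw [hTU]
    exact mem_biUnion (x := (x, ε)) ⟨hε.le, hball⟩ (Metric.mem_ball_self hε)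
  obtain ⟨i, hi, hxi⟩ := mem_iUnion₂.1 hxT
  obtain ⟨k, rfl⟩ : i ∈ range b := hb ▸ mem_insert_of_mem _ hi
  exact mem_iUnion.2 ⟨k, hxi⟩

theorem exists_analyticAt_mem_iff_exists_pos {E : Type*} [NormedAddCommGroup E]
    [InnerProductSpace ℝ E] [SecondCountableTopology E] {U : Set E} (hU : IsOpen U) :
    ∃ V : E → (ℕ →ᵇ ℝ), (∀ x, AnalyticAt ℝ V x) ∧ ∀ x, x ∈ U ↔ ∃ k, 0 < V x k := by
  obtain ⟨c, r, hr, rfl⟩ := exists_eq_iUnion_ball_of_isOpen hU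
  obtain ⟨V, hV, hVk⟩ := exists_analyticAt_eq_normalized_sq_sub_norm_sub_sq c r
  refine ⟨V, hV, fun x ↦ mem_iUnion.trans <| exists_congr fun k ↦ ?_⟩
  rw [hVk, div_pos_iff_of_pos_right (by positivity), sub_pos, mem_ball_iff_norm,
    sq_lt_sq₀ (norm_nonneg _) (hr k)]

theorem stmt19_general {E : Type*} [NormedAddCommGroup E] [InnerProductSpace ℝ E]
    [SecondCountableTopology E] {U : Set E} (hU : IsOpen U) :
    ∃ g : E × ℝ → ℝ, (∀ p, AnalyticAt ℝ g p) ∧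
      ∀ x, (x ∈ U → ⨆ y : ℝ, (g (x, y) : EReal) = 1) ∧
        (x ∉ U → ⨆ y : ℝ, (g (x, y) : EReal) = 0) := by
  obtain ⟨V, hV, hVU⟩ := exists_analyticAt_mem_iff_exists_pos hU
  let p : unitInterval := ⟨1 / 2, by norm_num, by norm_num⟩
  have : (geometricMeasure p).IsOpenPosMeasure :=
    isOpenPosMeasure_geometricMeasure (by simp [p, Subtype.ext_iff]) (by simp [p, Subtype.ext_iff])
  refine ⟨fun q ↦ mgfIndicator (V q.1) (geometricMeasure p) (q.2 ^ 2),
    fun q ↦ analyticAt_mgfIndicator_sq (hV q.1), fun x ↦ ⟨fun hx ↦ ?_, fun hx ↦ ?_⟩⟩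
  · obtain ⟨k, hk⟩ := (hVU x).1 hx
    exact iSup_mgfIndicator_sq_eq_one (f := V x) hk
  · exact iSup_mgfIndicator_sq_eq_zero (X := V x) <| .of_forall fun k ↦
      not_lt.1 fun hk ↦ hx ((hVU x).2 ⟨k, hk⟩)

/-- for every open `U ⊆ ℝⁿ` there is a function
`g : ℝⁿ × ℝ → ℝ`, real-analytic at every point, such that for each `x̄`,
`sup_{y ∈ ℝ} g(x̄, y)` (computed in `ℝ̄`) equals `1` if `x̄ ∈ U` and `0` if not. -/
theorem stmt19 (n : ℕ) (U : Set (Fin n → ℝ)) (hU : IsOpen U) :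
    ∃ g : ((Fin n → ℝ) × ℝ) → ℝ,
      (∀ p : (Fin n → ℝ) × ℝ, AnalyticAt ℝ g p) ∧
      ∀ x : Fin n → ℝ,
        (x ∈ U → (⨆ y : ℝ, ((g (x, y) : ℝ) : EReal)) = 1) ∧
        (x ∉ U → (⨆ y : ℝ, ((g (x, y) : ℝ) : EReal)) = 0) := by
  let e := (EuclideanSpace.equiv (Fin n) ℝ).symm
  obtain ⟨g, hg, hsup⟩ := stmt19_general (hU.preimage e.symm.continuous)
  exact ⟨fun p ↦ g (e p.1, p.2), fun p ↦ (hg _).comp ((e.prodCongr (.refl ℝ ℝ)).analyticAt p),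
    fun x ↦ hsup (e x)⟩
end
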